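/- arXiv:1412.7174 — 4 statements merged into one kernel-verified Lean document; each statement's English description precedes it below -/
import Mathlib

section
/- Let G be an n×n Hermitian positive definite complex matrix, and partition its rows and columns into m consecutive blocks of sizes r_1,…,r_m with r_1+⋯+r_m = n. Then there exists a block-diagonal matrix D = diag(D_1,…,D_m), with each D_i an r_i×r_i positive definite matrix, such that for every i the i-th diagonal block of the unique positive definite square root of DGD equals D_i². -/
open Matrix
open scoped ComplexOrder

noncomputable section

/-- Rank-one outer product `x x*` as an `n × n` complex matrix. -/
def outer {n : ℕ} (x : Fin n → ℂ) : Matrix (Fin n) (Fin n) ℂ :=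
  Matrix.vecMulVec x (star x)

/-- A POVM indexed by `ι`: positive semidefinite elements summing to the identity. -/
def IsPOVM {ι : Type} [Fintype ι] {n : ℕ} (E : ι → Matrix (Fin n) (Fin n) ℂ) : Prop :=
  (∀ i, (E i).PosSemidef) ∧ ∑ i, E i = 1

/-- Success probability of the POVM `E` for the ensemble `(p, ρ)`. -/
def succProb {ι : Type} [Fintype ι] {n : ℕ} (p : ι → ℝ)
    (ρ E : ι → Matrix (Fin n) (Fin n) ℂ) : ℝ :=
  ∑ i, p i * ((ρ i * E i).trace).re

/-- `P` is a POVM maximizing the success probability for the ensemble `(p, ρ)`. -/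
def IsOptimal {ι : Type} [Fintype ι] {n : ℕ} (p : ι → ℝ)
    (ρ P : ι → Matrix (Fin n) (Fin n) ℂ) : Prop :=
  IsPOVM P ∧ ∀ E, IsPOVM E → succProb p ρ E ≤ succProb p ρ P

/-- An ensemble of states: positive probabilities summing to 1, states positive
semidefinite of trace 1. -/
def IsEnsemble {ι : Type} [Fintype ι] {n : ℕ} (p : ι → ℝ)
    (ρ : ι → Matrix (Fin n) (Fin n) ℂ) : Prop :=
  (∀ i, 0 < p i) ∧ ∑ i, p i = 1 ∧ (∀ i, (ρ i).PosSemidef) ∧ ∀ i, (ρ i).trace = 1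

/-- A linearly independent (LI) ensemble: the ranks sum to `n` and the column spaces
of the states together span `ℂ^n`. -/
def IsLIEnsemble {ι : Type} [Fintype ι] {n : ℕ} (p : ι → ℝ)
    (ρ : ι → Matrix (Fin n) (Fin n) ℂ) : Prop :=
  IsEnsemble p ρ ∧ (∑ i, (ρ i).rank = n) ∧
    (⨆ i, LinearMap.range (ρ i).mulVecLin) = ⊤

/-- A projective measurement: mutually orthogonal Hermitian idempotents summing to
the identity. -/
def IsProjectiveMeasurement {ι : Type} [Fintype ι] {n : ℕ}
    (P : ι → Matrix (Fin n) (Fin n) ℂ) : Prop :=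
  (∀ i j, i ≠ j → P i * P j = 0) ∧ (∀ i, P i * P i = P i) ∧
    (∀ i, (P i).IsHermitian) ∧ ∑ i, P i = 1

/-- The pretty good measurement of the ensemble `(q, σ)` (with elements
`S^{-1/2} qᵢσᵢ S^{-1/2}`, `S = ∑ qⱼσⱼ`, `S^{1/2}` the unique positive definite square
root of `S`) is an optimal POVM for the minimum error discrimination of `(p, ρ)`. -/
def PGMIsOptimal {m n : ℕ} (q : Fin m → ℝ) (σ : Fin m → Matrix (Fin n) (Fin n) ℂ)
    (p : Fin m → ℝ) (ρ : Fin m → Matrix (Fin n) (Fin n) ℂ) : Prop :=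
  ∀ R : Matrix (Fin n) (Fin n) ℂ, R.PosDef → R * R = ∑ j, (q j : ℂ) • σ j →
    IsOptimal p ρ (fun i => R⁻¹ * ((q i : ℂ) • σ i) * R⁻¹)

/-!
Write `G = Aᴴ * A` with `A` invertible. Every matrix `W = U * A` with `U` unitary satisfies
`Wᴴ * W = G`; by compactness, choose `U` such that the Frobenius norm of the pinching (the diagonal
blocks) of `W` is maximal. The first-order condition along `U ↦ exp (t • K) * U`, together with
comparison with reflections, shows that `W * (pinching W)ᴴ` is positive semidefinite. Equality in
the comparison with reflections in kernel vectors shows that the diagonal blocks of `W` are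
invertible. Multiplying `W` on the left by a block-diagonal unitary, as in the polar decomposition,
makes its blocks `D i` positive definite, while `W * diag D` stays positive semidefinite. It squares
to `diag D * G * diag D`, so it is the square root, and its diagonal blocks are `D i * D i`.
-/

section Blocks

variable {o : Type*} {k l m : o → Type*} {α : Type*} [Fintype o] [DecidableEq o]

theorem blockDiagonal'_mulVec [NonUnitalNonAssocSemiring α] [∀ i, Fintype (l i)]
    (D : ∀ i, Matrix (k i) (l i) α) (v : (Σ i, l i) → α) (i : o) (a : k i) :
    (blockDiagonal' D *ᵥ v) ⟨i, a⟩ = (D i *ᵥ fun b => v ⟨i, b⟩) a := by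
  simp only [mulVec, dotProduct, Fintype.sum_sigma]
  rw [Finset.sum_eq_single i (fun j _ hj => Finset.sum_eq_zero fun b _ => by
    rw [blockDiagonal'_apply_ne _ _ _ hj.symm, zero_mul]) (by simp)]
  simp only [blockDiagonal'_apply_eq]

theorem vecMul_blockDiagonal' [NonUnitalNonAssocSemiring α] [∀ i, Fintype (k i)]
    (v : (Σ i, k i) → α) (D : ∀ i, Matrix (k i) (l i) α) (i : o) (b : l i) :
    (v ᵥ* blockDiagonal' D) ⟨i, b⟩ = ((fun a => v ⟨i, a⟩) ᵥ* D i) b := by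
  simp only [vecMul, dotProduct, Fintype.sum_sigma]
  rw [Finset.sum_eq_single i (fun j _ hj => Finset.sum_eq_zero fun a _ => by
    rw [blockDiagonal'_apply_ne _ _ _ hj, mul_zero]) (by simp)]
  simp only [blockDiagonal'_apply_eq]

theorem blockDiag'_blockDiagonal'_mul [NonUnitalNonAssocSemiring α] [∀ i, Fintype (l i)]
    (D : ∀ i, Matrix (k i) (l i) α) (M : Matrix (Σ i, l i) (Σ i, m i) α) (i : o) :
    blockDiag' (blockDiagonal' D * M) i = D i * blockDiag' M i := by
  ext a b
  exact blockDiagonal'_mulVec D (fun p => M p ⟨i, b⟩) i a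

theorem blockDiag'_mul_blockDiagonal' [NonUnitalNonAssocSemiring α] [∀ i, Fintype (l i)]
    (M : Matrix (Σ i, k i) (Σ i, l i) α) (D : ∀ i, Matrix (l i) (m i) α) (i : o) :
    blockDiag' (M * blockDiagonal' D) i = blockDiag' M i * D i := by
  ext a b
  exact vecMul_blockDiagonal' (M ⟨i, a⟩) D i b

variable [∀ i, Fintype (k i)] [∀ i, DecidableEq (k i)]

theorem isUnit_blockDiagonal' [Semiring α]
    {D : ∀ i, Matrix (k i) (k i) α} (hD : ∀ i, IsUnit (D i)) : IsUnit (blockDiagonal' D) :=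
  (Pi.isUnit_iff.mpr hD).map (blockDiagonal'RingHom k α)

theorem blockDiagonal'_mem_unitaryGroup [CommRing α] [StarRing α]
    {V : ∀ i, Matrix (k i) (k i) α} (hV : ∀ i, V i ∈ unitaryGroup (k i) α) :
    blockDiagonal' V ∈ unitaryGroup (Σ i, k i) α := by
  rw [mem_unitaryGroup_iff, star_eq_conjTranspose, blockDiagonal'_conjTranspose,
    ← blockDiagonal'_mul, ← blockDiagonal'_one]
  exact congrArg _ (funext fun i => mem_unitaryGroup_iff.mp (hV i))

end Blocks

section Pinching

variable {o : Type*} {k : o → Type*} {α : Type*} [DecidableEq o]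

/-- The pinching of a block matrix: its diagonal blocks are kept, the others are replaced by `0`. -/
def pinching [Zero α] (M : Matrix (Σ i, k i) (Σ i, k i) α) : Matrix (Σ i, k i) (Σ i, k i) α :=
  blockDiagonal' (blockDiag' M)

theorem pinching_apply_same [Zero α] (M : Matrix (Σ i, k i) (Σ i, k i) α) (i : o) (a b : k i) :
    pinching M ⟨i, a⟩ ⟨i, b⟩ = M ⟨i, a⟩ ⟨i, b⟩ :=
  blockDiagonal'_apply_eq _ _ _ _

theorem pinching_sub [AddGroup α] (M N : Matrix (Σ i, k i) (Σ i, k i) α) :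
    pinching (M - N) = pinching M - pinching N := by
  rw [pinching, blockDiag'_sub, blockDiagonal'_sub, pinching, pinching]

theorem pinching_conjTranspose [AddMonoid α] [StarAddMonoid α]
    (M : Matrix (Σ i, k i) (Σ i, k i) α) : (pinching M)ᴴ = pinching Mᴴ := by
  rw [pinching, blockDiagonal'_conjTranspose, pinching]
  exact congrArg _ (funext fun i => (blockDiag'_conjTranspose M i).symm)

theorem trace_pinching [Fintype o] [∀ i, Fintype (k i)] [AddCommMonoid α]
    (M : Matrix (Σ i, k i) (Σ i, k i) α) : trace (pinching M) = trace M := by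
  rw [pinching, trace_blockDiagonal', trace, Fintype.sum_sigma]
  rfl

variable [Fintype o] [∀ i, Fintype (k i)] [NonUnitalNonAssocSemiring α]

theorem pinching_blockDiagonal'_mul (D : ∀ i, Matrix (k i) (k i) α)
    (M : Matrix (Σ i, k i) (Σ i, k i) α) :
    pinching (blockDiagonal' D * M) = blockDiagonal' D * pinching M := by
  rw [pinching, pinching, ← blockDiagonal'_mul]
  exact congrArg _ (funext (blockDiag'_blockDiagonal'_mul D M))

theorem pinching_mul_blockDiagonal' (M : Matrix (Σ i, k i) (Σ i, k i) α)
    (D : ∀ i, Matrix (k i) (k i) α) :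
    pinching (M * blockDiagonal' D) = pinching M * blockDiagonal' D := by
  rw [pinching, pinching, ← blockDiagonal'_mul]
  exact congrArg _ (funext (blockDiag'_mul_blockDiagonal' M D))

theorem trace_pinching_mul_pinching (M N : Matrix (Σ i, k i) (Σ i, k i) α) :
    trace (pinching M * pinching N) = trace (M * pinching N) := by
  rw [← trace_pinching (M * pinching N)]
  exact congrArg trace (pinching_mul_blockDiagonal' M (blockDiag' N)).symm

end Pinching

section Householder

variable {n 𝕜 : Type*} [Fintype n] [DecidableEq n] [RCLike 𝕜]

/-- The Householder reflection `1 - 2 u u* / (u* u)` in the hyperplane orthogonal to `u`. It is the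
identity for `u = 0`, because `2 / 0 = 0`. -/
def householder (u : n → 𝕜) : Matrix n n 𝕜 :=
  1 - (2 / (star u ⬝ᵥ u)) • vecMulVec u (star u)

theorem householder_mul (u : n → 𝕜) (M : Matrix n n 𝕜) :
    householder u * M = M - (2 / (star u ⬝ᵥ u)) • vecMulVec u (star u ᵥ* M) := by
  rw [householder, sub_mul, one_mul, smul_mul_assoc, vecMulVec_mul]

theorem trace_householder_mul (u : n → 𝕜) (M : Matrix n n 𝕜) :
    trace (householder u * M) = trace M - 2 / (star u ⬝ᵥ u) * (star u ⬝ᵥ M *ᵥ u) := by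
  rw [householder_mul, trace_sub, trace_smul, trace_vecMulVec, smul_eq_mul, dotProduct_mulVec,
    dotProduct_comm u]

theorem householder_isHermitian (u : n → 𝕜) : (householder u).IsHermitian := by
  have h : star (2 / (star u ⬝ᵥ u)) = 2 / (star u ⬝ᵥ u) := by
    rw [star_div₀, star_ofNat, ← star_dotProduct]
  rw [IsHermitian, householder, conjTranspose_sub, conjTranspose_one, conjTranspose_smul,
    conjTranspose_vecMulVec, star_star, h]

theorem householder_mem_unitaryGroup (u : n → 𝕜) : householder u ∈ unitaryGroup n 𝕜 := by
  rw [mem_unitaryGroup_iff, star_eq_conjTranspose, (householder_isHermitian u).eq]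
  obtain rfl | hu := eq_or_ne u 0
  · simp [householder]
  have hs : star u ⬝ᵥ u ≠ 0 := mt dotProduct_star_self_eq_zero.mp hu
  have hvec : star u ᵥ* householder u = -star u := by
    rw [householder, vecMul_sub, vecMul_one, vecMul_smul, vecMul_vecMulVec, smul_smul,
      div_mul_cancel₀ _ hs, two_smul, sub_add_cancel_left]
  rw [householder_mul, hvec, householder, vecMulVec_neg, smul_neg, sub_neg_eq_add, sub_add_cancel]

end Householder

section RealTraceForm

variable {m n 𝕜 : Type*} [Fintype m] [Fintype n] [RCLike 𝕜]

theorem re_trace_mul_conjTranspose_self_nonneg (M : Matrix m n 𝕜) :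
    0 ≤ RCLike.re (trace (M * Mᴴ)) :=
  (RCLike.nonneg_iff.mp (posSemidef_self_mul_conjTranspose M).trace_nonneg).1

theorem re_trace_mul_conjTranspose_self_eq_zero_iff {M : Matrix m n 𝕜} :
    RCLike.re (trace (M * Mᴴ)) = 0 ↔ M = 0 := by
  have him : RCLike.im (trace (M * Mᴴ)) = 0 :=
    (RCLike.nonneg_iff.mp (posSemidef_self_mul_conjTranspose M).trace_nonneg).2
  rw [← trace_mul_conjTranspose_self_eq_zero_iff, RCLike.ext_iff (z := trace _), map_zero, map_zero,
    and_iff_left him]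

theorem re_trace_mul_conjTranspose_comm (M N : Matrix m n 𝕜) :
    RCLike.re (trace (M * Nᴴ)) = RCLike.re (trace (N * Mᴴ)) := by
  rw [← conjTranspose_conjTranspose (M * Nᴴ), trace_conjTranspose, conjTranspose_mul,
    conjTranspose_conjTranspose]
  exact RCLike.conj_re _

theorem re_trace_sub_mul_conjTranspose_sub (M N : Matrix m n 𝕜) :
    RCLike.re (trace ((M - N) * (M - N)ᴴ)) =
      RCLike.re (trace (M * Mᴴ)) + RCLike.re (trace (N * Nᴴ)) - 2 * RCLike.re (trace (M * Nᴴ)) := by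
  have hcomm := re_trace_mul_conjTranspose_comm M N
  simp only [conjTranspose_sub, Matrix.sub_mul, Matrix.mul_sub, trace_sub, map_sub]
  linarith

end RealTraceForm

section UnitaryVariation

variable {n 𝕜 : Type*} [Fintype n] [DecidableEq n] [RCLike 𝕜]

theorem conjTranspose_mul_self_of_mem_unitaryGroup {m α : Type*} [CommRing α] [StarRing α]
    {V : Matrix n n α} (hV : V ∈ unitaryGroup n α) (M : Matrix n m α) :
    (V * M)ᴴ * (V * M) = Mᴴ * M := by
  rw [conjTranspose_mul, Matrix.mul_assoc, ← Matrix.mul_assoc Vᴴ, ← star_eq_conjTranspose V,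
    mem_unitaryGroup_iff'.mp hV, Matrix.one_mul]

theorem isCompact_unitaryGroup : IsCompact (unitaryGroup n 𝕜 : Set (Matrix n n 𝕜)) := by
  have hclosed : IsClosed (unitaryGroup n 𝕜 : Set (Matrix n n 𝕜)) := isClosed_unitary
  have hbox : IsCompact (Set.univ.pi fun _ : n => Set.univ.pi fun _ : n =>
      Metric.closedBall (0 : 𝕜) 1) :=
    isCompact_univ_pi fun _ => isCompact_univ_pi fun _ => isCompact_closedBall _ _
  exact hbox.of_isClosed_subset hclosed fun U hU i _ j _ => by
    simpa only [mem_closedBall_zero_iff] using entry_norm_bound_of_unitary hU i j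

theorem exp_mem_unitaryGroup {K : Matrix n n 𝕜} (hK : K ∈ skewAdjoint (Matrix n n 𝕜)) :
    NormedSpace.exp K ∈ unitaryGroup n 𝕜 := by
  rw [mem_unitaryGroup_iff, star_eq_conjTranspose, ← exp_conjTranspose, ← star_eq_conjTranspose,
    skewAdjoint.mem_iff.mp hK, Matrix.exp_neg]
  exact mul_nonsing_inv _ ((isUnit_iff_isUnit_det _).mp (isUnit_exp K))

open scoped Matrix.Norms.Operator in
theorem re_trace_mul_eq_zero_of_re_trace_le {R K : Matrix n n 𝕜}
    (hR : ∀ V ∈ unitaryGroup n 𝕜, RCLike.re (trace (V * R)) ≤ RCLike.re (trace R))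
    (hK : K ∈ skewAdjoint (Matrix n n 𝕜)) : RCLike.re (trace (K * R)) = 0 := by
  let reTraceMul : Matrix n n 𝕜 →ₗ[ℝ] ℝ :=
    RCLike.reLm ∘ₗ traceLinearMap n ℝ 𝕜 ∘ₗ LinearMap.mulRight ℝ R
  have hderiv :
      HasDerivAt (fun t : ℝ => reTraceMul (NormedSpace.exp (t • K))) (reTraceMul K) 0 := by
    have hexp := hasDerivAt_exp_smul_const K (0 : ℝ)
    rw [zero_smul, NormedSpace.exp_zero, one_mul] at hexp
    exact reTraceMul.toContinuousLinearMap.hasFDerivAt.comp_hasDerivAt (0 : ℝ) hexp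
  have hmax : IsLocalMax (fun t : ℝ => reTraceMul (NormedSpace.exp (t • K))) 0 :=
    Filter.Eventually.of_forall fun t => by
      simpa [reTraceMul] using hR _ (exp_mem_unitaryGroup (skewAdjoint.smul_mem t hK))
  exact hmax.hasDerivAt_eq_zero hderiv

theorem isHermitian_of_re_trace_le {R : Matrix n n 𝕜}
    (hR : ∀ V ∈ unitaryGroup n 𝕜, RCLike.re (trace (V * R)) ≤ RCLike.re (trace R)) :
    R.IsHermitian := by
  have hK : R - Rᴴ ∈ skewAdjoint (Matrix n n 𝕜) := by
    rw [skewAdjoint.mem_iff, star_eq_conjTranspose, conjTranspose_sub, conjTranspose_conjTranspose,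
      neg_sub]
  have hre : RCLike.re (trace ((R - Rᴴ) * R)) = 0 := re_trace_mul_eq_zero_of_re_trace_le hR hK
  have hstar : trace ((R - Rᴴ) * Rᴴ) = -star (trace ((R - Rᴴ) * R)) := by
    rw [← trace_conjTranspose, conjTranspose_mul, ← star_eq_conjTranspose (R - Rᴴ),
      skewAdjoint.mem_iff.mp hK, mul_neg, trace_neg, neg_neg, trace_mul_comm]
  have hnorm : RCLike.re (trace ((R - Rᴴ) * (R - Rᴴ)ᴴ)) = 0 := by
    rw [conjTranspose_sub, conjTranspose_conjTranspose, mul_sub, trace_sub, hstar]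
    simp [hre]
  rw [re_trace_mul_conjTranspose_self_eq_zero_iff, sub_eq_zero] at hnorm
  exact hnorm.symm

theorem posSemidef_of_re_trace_le {R : Matrix n n 𝕜}
    (hR : ∀ V ∈ unitaryGroup n 𝕜, RCLike.re (trace (V * R)) ≤ RCLike.re (trace R)) :
    R.PosSemidef := by
  have hherm : R.IsHermitian := isHermitian_of_re_trace_le hR
  refine .of_dotProduct_mulVec_nonneg hherm fun u => ?_
  obtain rfl | hu := eq_or_ne u 0
  · simp
  have him : RCLike.im (star u ⬝ᵥ R *ᵥ u) = 0 := hherm.im_star_dotProduct_mulVec_self u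
  have hs : 0 < 2 / (star u ⬝ᵥ u) := div_pos two_pos (dotProduct_star_self_pos_iff.mpr hu)
  have hre := hR _ (householder_mem_unitaryGroup u)
  rw [trace_householder_mul, map_sub, RCLike.mul_re, him, mul_zero, sub_zero,
    sub_le_self_iff] at hre
  exact RCLike.nonneg_iff.mpr ⟨nonneg_of_mul_nonneg_right hre (RCLike.pos_iff.mp hs).1, him⟩

end UnitaryVariation

section SquareRoot

open scoped MatrixOrder Matrix.Norms.L2Operator

variable {n 𝕜 : Type*} [Fintype n] [RCLike 𝕜]

theorem exists_posDef_mul_self_eq {A : Matrix n n 𝕜} (hA : A.PosDef) :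
    ∃ P : Matrix n n 𝕜, P.PosDef ∧ P * P = A := by
  classical
  exact ⟨CFC.sqrt A, (hA.isStrictlyPositive.sqrt A).posDef,
    CFC.sqrt_mul_sqrt_self A hA.posSemidef.nonneg⟩

theorem posSemidef_eq_of_mul_self_eq {A B : Matrix n n 𝕜} (hA : A.PosSemidef) (hB : B.PosSemidef)
    (h : A * A = B * B) : A = B := by
  classical
  exact (CFC.mul_self_eq_mul_self_iff A B hA.nonneg hB.nonneg).mp h

theorem exists_mem_unitaryGroup_mul_posDef [DecidableEq n] {M : Matrix n n 𝕜} (hM : IsUnit M) :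
    ∃ V ∈ unitaryGroup n 𝕜, (V * M).PosDef := by
  have hMM : (Mᴴ * M).PosDef :=
    .conjTranspose_mul_self M (mulVec_injective_iff_isUnit.mpr hM)
  obtain ⟨P, hP, hPP⟩ := exists_posDef_mul_self_eq hMM
  have hdet : IsUnit M.det := (isUnit_iff_isUnit_det M).mp hM
  refine ⟨P * M⁻¹, ?_, by rwa [nonsing_inv_mul_cancel_right _ _ hdet]⟩
  rw [mem_unitaryGroup_iff', star_eq_conjTranspose]
  calc (P * M⁻¹)ᴴ * (P * M⁻¹) = (M⁻¹)ᴴ * (P * P) * M⁻¹ := by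
        simp only [conjTranspose_mul, hP.isHermitian.eq, Matrix.mul_assoc]
    _ = (M * M⁻¹)ᴴ * (M * M⁻¹) := by
        rw [hPP]; simp only [conjTranspose_mul, Matrix.mul_assoc]
    _ = 1 := by rw [mul_nonsing_inv _ hdet, conjTranspose_one, Matrix.one_mul]

end SquareRoot

theorem exists_mulVec_eq_zero_and_isUnit {n K : Type*} [Fintype n] [DecidableEq n] [Field K]
    (M : Matrix n n K) : ∃ v, M *ᵥ v = 0 ∧ (v = 0 → IsUnit M) := by
  by_cases hM : M.det = 0
  · obtain ⟨v, hv, hMv⟩ := exists_mulVec_eq_zero_iff.mpr hM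
    exact ⟨v, hMv, fun h => absurd h hv⟩
  · exact ⟨0, mulVec_zero M, fun _ => (isUnit_iff_isUnit_det M).mpr (Ne.isUnit hM)⟩

section PinchingNorm

variable {o : Type*} {k : o → Type*} {𝕜 : Type*} [Fintype o] [DecidableEq o]
  [∀ i, Fintype (k i)] [RCLike 𝕜]

/-- The squared Frobenius norm of the pinching of `W`. -/
def pinchingNormSq (W : Matrix (Σ i, k i) (Σ i, k i) 𝕜) : ℝ :=
  RCLike.re (trace (pinching W * (pinching W)ᴴ))

theorem pinchingNormSq_eq_re_trace (W : Matrix (Σ i, k i) (Σ i, k i) 𝕜) :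
    pinchingNormSq W = RCLike.re (trace (W * (pinching W)ᴴ)) := by
  rw [pinchingNormSq, pinching_conjTranspose, trace_pinching_mul_pinching]

theorem pinchingNormSq_nonneg (W : Matrix (Σ i, k i) (Σ i, k i) 𝕜) : 0 ≤ pinchingNormSq W :=
  re_trace_mul_conjTranspose_self_nonneg _

theorem pinchingNormSq_eq_zero_iff {W : Matrix (Σ i, k i) (Σ i, k i) 𝕜} :
    pinchingNormSq W = 0 ↔ pinching W = 0 :=
  re_trace_mul_conjTranspose_self_eq_zero_iff

theorem pinchingNormSq_sub (X W : Matrix (Σ i, k i) (Σ i, k i) 𝕜) :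
    pinchingNormSq (X - W) =
      pinchingNormSq X + pinchingNormSq W - 2 * RCLike.re (trace (X * (pinching W)ᴴ)) := by
  rw [pinchingNormSq, pinching_sub, re_trace_sub_mul_conjTranspose_sub,
    pinching_conjTranspose W, trace_pinching_mul_pinching X, ← pinching_conjTranspose W]
  rfl

theorem continuous_pinchingNormSq :
    Continuous (pinchingNormSq : Matrix (Σ i, k i) (Σ i, k i) 𝕜 → ℝ) := by
  unfold pinchingNormSq pinching
  fun_prop

end PinchingNorm

section Maximal

variable {o : Type*} {k : o → Type*} {𝕜 : Type*} [Fintype o] [DecidableEq o]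
  [∀ i, Fintype (k i)] [∀ i, DecidableEq (k i)] [RCLike 𝕜]

/-- `W` maximizes the Frobenius norm of the pinching among its left unitary translates. -/
def IsPinchingMaximal (W : Matrix (Σ i, k i) (Σ i, k i) 𝕜) : Prop :=
  ∀ V ∈ unitaryGroup (Σ i, k i) 𝕜, pinchingNormSq (V * W) ≤ pinchingNormSq W

theorem exists_isPinchingMaximal_mul (A : Matrix (Σ i, k i) (Σ i, k i) 𝕜) :
    ∃ U ∈ unitaryGroup (Σ i, k i) 𝕜, IsPinchingMaximal (U * A) := by
  have hcont : Continuous fun U : Matrix (Σ i, k i) (Σ i, k i) 𝕜 => pinchingNormSq (U * A) :=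
    continuous_pinchingNormSq.comp (continuous_id.matrix_mul continuous_const)
  obtain ⟨U, hU, hmax⟩ :=
    isCompact_unitaryGroup.exists_isMaxOn ⟨1, one_mem _⟩ hcont.continuousOn
  refine ⟨U, hU, fun V hV => ?_⟩
  rw [← Matrix.mul_assoc]
  exact hmax (mul_mem hV hU)

namespace IsPinchingMaximal

variable {W : Matrix (Σ i, k i) (Σ i, k i) 𝕜}

theorem pinchingNormSq_sub_le (hW : IsPinchingMaximal W) {V : Matrix (Σ i, k i) (Σ i, k i) 𝕜}
    (hV : V ∈ unitaryGroup (Σ i, k i) 𝕜) :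
    pinchingNormSq (V * W - W) ≤ 2 * (RCLike.re (trace (W * (pinching W)ᴴ)) -
      RCLike.re (trace (V * (W * (pinching W)ᴴ)))) := by
  rw [pinchingNormSq_sub, ← Matrix.mul_assoc, ← pinchingNormSq_eq_re_trace]
  linarith [hW V hV]

theorem posSemidef (hW : IsPinchingMaximal W) : (W * (pinching W)ᴴ).PosSemidef :=
  posSemidef_of_re_trace_le fun V hV => by
    linarith [pinchingNormSq_nonneg (V * W - W), hW.pinchingNormSq_sub_le hV]

-- The reflection in `u` fixes the trace of `W * (pinching W)ᴴ`, so it must fix `pinching W`.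
theorem mul_vecMul_eq_zero (hW : IsPinchingMaximal W) {u : (Σ i, k i) → 𝕜}
    (hu : (W * (pinching W)ᴴ) *ᵥ u = 0) (i : o) (a b : k i) :
    u ⟨i, a⟩ * (star u ᵥ* W) ⟨i, b⟩ = 0 := by
  obtain rfl | hu0 := eq_or_ne u 0
  · simp
  have hle := hW.pinchingNormSq_sub_le (householder_mem_unitaryGroup u)
  rw [trace_householder_mul, hu, dotProduct_zero, mul_zero, sub_zero, sub_self, mul_zero] at hle
  have hpinch := pinchingNormSq_eq_zero_iff.mp (le_antisymm hle (pinchingNormSq_nonneg _))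
  have hentry := congrFun₂ hpinch ⟨i, a⟩ ⟨i, b⟩
  rw [pinching_apply_same, householder_mul, sub_sub_cancel_left] at hentry
  have hs : star u ⬝ᵥ u ≠ 0 := mt dotProduct_star_self_eq_zero.mp hu0
  simpa [vecMulVec_apply, hs] using hentry

theorem eq_zero_of_conjTranspose_pinching_mulVec_eq_zero (hW : IsPinchingMaximal W)
    (hunit : IsUnit W) {u : (Σ i, k i) → 𝕜} (hu : (pinching W)ᴴ *ᵥ u = 0)
    (hblock : ∀ i, (∀ a, u ⟨i, a⟩ = 0) → IsUnit (blockDiag' W i)ᴴ) : u = 0 := by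
  have hRu : (W * (pinching W)ᴴ) *ᵥ u = 0 := by rw [← mulVec_mulVec, hu, mulVec_zero]
  have huR : (star u ᵥ* W) ᵥ* (pinching W)ᴴ = 0 := by
    rw [vecMul_vecMul, ← star_eq_zero, star_vecMul, star_star, hW.posSemidef.isHermitian.eq, hRu]
  have huW : star u ᵥ* W = 0 := by
    ext ⟨i, b⟩
    by_cases hui : ∀ a, u ⟨i, a⟩ = 0
    · have hi : (fun a => (star u ᵥ* W) ⟨i, a⟩) ᵥ* (blockDiag' W i)ᴴ = 0 := by
        ext a
        rw [pinching, blockDiagonal'_conjTranspose] at huR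
        exact (vecMul_blockDiagonal' _ (fun j => (blockDiag' W j)ᴴ) i a).symm.trans
          (congrFun huR ⟨i, a⟩)
      exact congrFun (vecMul_injective_iff_isUnit.mpr (hblock i hui)
        (hi.trans (zero_vecMul _).symm)) b
    · obtain ⟨a, ha⟩ := not_forall.mp hui
      exact (mul_eq_zero.mp (hW.mul_vecMul_eq_zero hRu i a b)).resolve_left ha
  exact star_eq_zero.mp (vecMul_injective_iff_isUnit.mpr hunit (huW.trans (zero_vecMul W).symm))

-- The test vector is a kernel vector of `(pinching W)ᴴ` that is nonzero in every singular block.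
theorem isUnit_blockDiag' (hW : IsPinchingMaximal W) (hunit : IsUnit W) (i : o) :
    IsUnit (blockDiag' W i) := by
  choose v hv hv_unit using fun j => exists_mulVec_eq_zero_and_isUnit (blockDiag' W j)ᴴ
  have hker : (pinching W)ᴴ *ᵥ (fun p => v p.1 p.2) = 0 := by
    ext ⟨j, a⟩
    rw [pinching, blockDiagonal'_conjTranspose, blockDiagonal'_mulVec]
    exact congrFun (hv j) a
  have hzero := hW.eq_zero_of_conjTranspose_pinching_mulVec_eq_zero hunit hker
    fun j hj => hv_unit j (funext hj)
  exact (isUnit_conjTranspose _).mp (hv_unit i (funext fun a => congrFun hzero ⟨i, a⟩))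

end IsPinchingMaximal

theorem exists_conjTranspose_mul_self_eq_posDef_blockDiag'
    {A : Matrix (Σ i, k i) (Σ i, k i) 𝕜} (hA : IsUnit A) :
    ∃ W : Matrix (Σ i, k i) (Σ i, k i) 𝕜, Wᴴ * W = Aᴴ * A ∧
      (∀ i, (blockDiag' W i).PosDef) ∧ (W * pinching W).PosSemidef := by
  obtain ⟨U, hU, hmax⟩ := exists_isPinchingMaximal_mul A
  have hunit : IsUnit (U * A) := (Unitary.isUnit_coe (U := ⟨U, hU⟩)).mul hA
  choose V hV hpos using fun i =>
    exists_mem_unitaryGroup_mul_posDef (hmax.isUnit_blockDiag' hunit i)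
  have hblock (i : o) : blockDiag' (blockDiagonal' V * (U * A)) i = V i * blockDiag' (U * A) i :=
    blockDiag'_blockDiagonal'_mul V (U * A) i
  have hherm : (pinching (blockDiagonal' V * (U * A))).IsHermitian := by
    rw [pinching, isHermitian_blockDiagonal'_iff]
    exact fun i => hblock i ▸ (hpos i).isHermitian
  refine ⟨blockDiagonal' V * (U * A), ?_, fun i => hblock i ▸ hpos i, ?_⟩
  · rw [conjTranspose_mul_self_of_mem_unitaryGroup (blockDiagonal'_mem_unitaryGroup hV),
      conjTranspose_mul_self_of_mem_unitaryGroup hU]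
  · rw [← hherm.eq, pinching_blockDiagonal'_mul, conjTranspose_mul]
    simpa only [Matrix.mul_assoc] using
      hmax.posSemidef.mul_mul_conjTranspose_same (blockDiagonal' V)

end Maximal

theorem stmt_16_general {o : Type*} {k : o → Type*} {𝕜 : Type*} [Fintype o] [DecidableEq o]
    [∀ i, Fintype (k i)] [RCLike 𝕜] {G : Matrix (Σ i, k i) (Σ i, k i) 𝕜} (hG : G.PosDef) :
    ∃ D : ∀ i, Matrix (k i) (k i) 𝕜, (∀ i, (D i).PosDef) ∧
      ∀ R : Matrix (Σ i, k i) (Σ i, k i) 𝕜, R.PosDef →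
        R * R = blockDiagonal' D * G * blockDiagonal' D → ∀ i, blockDiag' R i = D i * D i := by
  classical
  obtain ⟨A, hA, rfl⟩ := exists_posDef_mul_self_eq hG
  obtain ⟨W, hWA, hD, hWD⟩ := exists_conjTranspose_mul_self_eq_posDef_blockDiag' hA.isUnit
  refine ⟨blockDiag' W, hD, fun R hR hRR i => ?_⟩
  have hherm : (pinching W).IsHermitian :=
    isHermitian_blockDiagonal'_iff.mpr fun i => (hD i).isHermitian
  have hsq : R * R = (W * pinching W) * (W * pinching W) :=
    calc R * R = pinching W * (A * A) * pinching W := hRR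
      _ = pinching W * (Wᴴ * W) * pinching W := by rw [hWA, hA.isHermitian.eq]
      _ = (W * pinching W)ᴴ * (W * pinching W) := by
        rw [conjTranspose_mul, hherm.eq]
        simp only [Matrix.mul_assoc]
      _ = (W * pinching W) * (W * pinching W) := by rw [hWD.isHermitian.eq]
  rw [posSemidef_eq_of_mul_self_eq hR.posSemidef hWD hsq]
  exact blockDiag'_mul_blockDiagonal' W (blockDiag' W) i

/-- For a positive definite `G` partitioned into blocks of sizes `r₁, …, rₘ`, there is
a block-diagonal positive definite `D = diag(D₁, …, Dₘ)` such that the `i`-th diagonal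
block of the unique positive definite square root of `DGD` equals `Dᵢ²`. -/
theorem stmt_16 {m : ℕ} (r : Fin m → ℕ)
    (G : Matrix ((i : Fin m) × Fin (r i)) ((i : Fin m) × Fin (r i)) ℂ)
    (hG : G.PosDef) :
    ∃ D : ∀ i, Matrix (Fin (r i)) (Fin (r i)) ℂ,
      (∀ i, (D i).PosDef) ∧
      ∀ R : Matrix ((i : Fin m) × Fin (r i)) ((i : Fin m) × Fin (r i)) ℂ,
        R.PosDef → R * R = Matrix.blockDiagonal' D * G * Matrix.blockDiagonal' D →
        ∀ i (a b : Fin (r i)), R ⟨i, a⟩ ⟨i, b⟩ = (D i * D i) a b := by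
  obtain ⟨D, hD, hR⟩ := stmt_16_general hG
  exact ⟨D, hD, fun R hR₁ hR₂ i a b => congrFun₂ (hR R hR₁ hR₂ i) a b⟩
end
end

section
/- Let (p_i, ρ_i)_{i=1}^m be a linearly independent (LI) ensemble on ℂ^n with r_i = rank ρ_i, and let (Π_i) be an optimal POVM for its minimum error discrimination. Then there exist nonzero vectors ψ_{ij} ∈ ℂ^n (1 ≤ i ≤ m, 1 ≤ j ≤ r_i) with p_iρ_i = ∑_{j=1}^{r_i} ψ_{ij}ψ_{ij}* and an orthonormal basis (w_{ij})_{1≤i≤m, 1≤j≤r_i} of ℂ^n with Π_i = ∑_{j=1}^{r_i} w_{ij}w_{ij}*, such that the rank-one POVM (w_{ij}w_{ij}*), indexed by the pairs (i,j), is an optimal POVM for the minimum error discrimination of the pure-state ensemble whose states are ψ_{ij}/‖ψ_{ij}‖ with probabilities ‖ψ_{ij}‖². -/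
open Matrix
open scoped ComplexOrder

noncomputable section

/-!
Write `A i = pᵢρᵢ`. Testing the optimal measurement `P` against small perturbations produces a
Hermitian `K` with `K ≥ A i` and `K * P i = A i * P i`. Since the ranges of the `A i` span, `K` is
invertible, whence `rank (P i) ≤ rank (A i) = r i`. The factors of `A i = Ψ * Ψᴴ` and `P i = W * Wᴴ`
with `r i` columns are unique up to unitaries on the right, so the singular value decomposition of
`Ψᴴ * W` lets one choose them with `Ψᴴ * W` diagonal. The columns `ψ` of `Ψ` and `w` of `W` are the
desired vectors: the `n` vectors `w` resolve the identity, hence are orthonormal, and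
diagonality turns `K * P i = A i * P i` into `K w = ψ ψ* w`. As also `K ≥ A i ≥ ψ ψ*`, the same `K`
certifies that the rank-one measurement is optimal for the pure states.
-/

section Factorization

variable {𝕜 n κ : Type*} [RCLike 𝕜] [Fintype n] [Fintype κ]

lemma exists_eq_mul_conjTranspose_of_rank_le {A : Matrix n n 𝕜} (hA : A.PosSemidef)
    (hr : A.rank ≤ Fintype.card κ) : ∃ B : Matrix n κ 𝕜, A = B * Bᴴ := by
  classical
  set d := hA.1.eigenvalues
  let U : Matrix n n 𝕜 := hA.1.eigenvectorUnitary
  rw [hA.1.rank_eq_card_non_zero_eigs] at hr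
  obtain ⟨e⟩ := Function.Embedding.nonempty_of_card_le hr
  -- `Y` keeps the eigenvectors of nonzero eigenvalues, and `J` pads it with zero columns.
  let Y : Matrix n {a // d a ≠ 0} 𝕜 := of fun k a => U k a * (√(d a) : ℝ)
  let J : Matrix {a // d a ≠ 0} κ 𝕜 := (1 : Matrix κ κ 𝕜).submatrix e id
  have hJ : J * Jᴴ = 1 := by
    rw [conjTranspose_submatrix, conjTranspose_one, ← submatrix_mul _ _ _ _ _ Function.bijective_id,
      Matrix.one_mul, submatrix_one _ e.injective]
  have hY : A = Y * Yᴴ := by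
    ext k l
    have hsq (a : n) : ((√(d a) : ℝ) : 𝕜) * (√(d a) : ℝ) = d a := by
      rw [← RCLike.ofReal_mul, Real.mul_self_sqrt (hA.eigenvalues_nonneg a)]
    have hA' : A k l = ∑ a, U k a * d a * star (U l a) := by
      conv_lhs => rw [hA.1.spectral_theorem]
      rw [Unitary.conjStarAlgAut_apply, mul_apply]
      exact Finset.sum_congr rfl fun a _ => by rw [mul_diagonal]; rfl
    rw [hA', ← Fintype.sum_subtype_add_sum_subtype fun a => d a ≠ 0,
      Finset.sum_eq_zero (s := (Finset.univ : Finset {a // ¬ d a ≠ 0}))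
        fun a _ => by simp [not_not.1 a.2], add_zero, mul_apply]
    refine Finset.sum_congr rfl fun a _ => ?_
    rw [← hsq]
    simp only [Y, of_apply, conjTranspose_apply, star_mul, RCLike.star_def, RCLike.conj_ofReal]
    ring
  refine ⟨Y * J, ?_⟩
  rw [conjTranspose_mul, Matrix.mul_assoc, ← Matrix.mul_assoc J, hJ, Matrix.one_mul, hY]

lemma trace_mul_nonneg_of_posSemidef {X Y : Matrix n n 𝕜} (hX : X.PosSemidef)
    (hY : Y.PosSemidef) : 0 ≤ (X * Y).trace := by
  obtain ⟨B, rfl⟩ := exists_eq_mul_conjTranspose_of_rank_le hY Y.rank_le_card_width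
  rw [← Matrix.mul_assoc, trace_mul_comm, ← Matrix.mul_assoc]
  exact (hX.conjTranspose_mul_mul_same B).trace_nonneg

lemma trace_mul_eq_zero_iff_of_posSemidef {X Y : Matrix n n 𝕜} (hX : X.PosSemidef)
    (hY : Y.PosSemidef) : (X * Y).trace = 0 ↔ X * Y = 0 := by
  refine ⟨fun h => ?_, fun h => by rw [h, trace_zero]⟩
  obtain ⟨B, rfl⟩ := exists_eq_mul_conjTranspose_of_rank_le hX X.rank_le_card_width
  obtain ⟨C, rfl⟩ := exists_eq_mul_conjTranspose_of_rank_le hY Y.rank_le_card_width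
  have hBC : Bᴴ * C = 0 := by
    rw [← trace_conjTranspose_mul_self_eq_zero_iff, ← h, conjTranspose_mul,
      conjTranspose_conjTranspose, trace_mul_comm (B * Bᴴ), trace_mul_comm (Cᴴ * B)]
    simp only [Matrix.mul_assoc]
    rw [trace_mul_comm]
    simp only [Matrix.mul_assoc]
  calc B * Bᴴ * (C * Cᴴ) = B * (Bᴴ * C) * Cᴴ := by simp only [Matrix.mul_assoc]
    _ = 0 := by rw [hBC, Matrix.mul_zero, Matrix.zero_mul]

lemma posSemidef_of_forall_isStarProjection {M : Matrix n n 𝕜} (hM : M.IsHermitian)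
    (h : ∀ Q : Matrix n n 𝕜, IsStarProjection Q → 0 ≤ RCLike.re (M * Q).trace) :
    M.PosSemidef := by
  classical
  refine hM.posSemidef_iff_eigenvalues_nonneg.2 fun k => ?_
  set v : n → 𝕜 := ⇑(hM.eigenvectorBasis k)
  have hv : star v ⬝ᵥ v = 1 := by
    rw [dotProduct_comm, ← EuclideanSpace.inner_eq_star_dotProduct]
    simp
  have hQ : IsStarProjection (vecMulVec v (star v)) :=
    ⟨by rw [IsIdempotentElem, vecMulVec_mul_vecMulVec, hv, one_smul],
      (posSemidef_vecMulVec_self_star v).1⟩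
  have := h _ hQ
  rwa [mul_vecMulVec, trace_vecMulVec, dotProduct_comm, ← hM.eigenvalues_eq] at this

lemma exists_unitary_conjTranspose_mul_isDiag [DecidableEq κ] {D : Matrix κ κ 𝕜}
    (hD : (Dᴴ * D).IsDiag) : ∃ X ∈ unitaryGroup κ 𝕜, (Xᴴ * D).IsDiag := by
  -- The columns of `D` are pairwise orthogonal: the nonzero ones, normalized, extend to an
  -- orthonormal basis, whose members are the columns of `X`.
  let f : κ → EuclideanSpace 𝕜 κ := fun k => WithLp.toLp 2 (D.col k)
  have hf : Pairwise fun j k => inner 𝕜 (f j) (f k) = 0 := fun j k hjk => by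
    rw [← hD hjk]
    exact dotProduct_comm _ _
  have hon : Orthonormal 𝕜
      ({k | f k ≠ 0}.domRestrict fun k => (‖f k‖⁻¹ : 𝕜) • f k) := by
    refine ⟨fun k => norm_smul_inv_norm k.2, fun j k hjk => ?_⟩
    simp [Set.domRestrict, inner_smul_left, inner_smul_right, hf (Subtype.coe_ne_coe.2 hjk)]
  obtain ⟨b, hb⟩ := hon.exists_orthonormalBasis_extension_of_card_eq finrank_euclideanSpace
  have hbf : ∀ j k, j ≠ k → inner 𝕜 (b j) (f k) = 0 := fun j k hjk => by
    by_cases hk : f k = 0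
    · rw [hk, inner_zero_right]
    · have hk' : (‖f k‖⁻¹ : 𝕜) ≠ 0 := by simpa using hk
      have : inner 𝕜 (b j) (b k) = 0 := b.orthonormal.2 hjk
      rwa [hb k hk, inner_smul_right, mul_eq_zero_iff_left hk'] at this
  refine ⟨_, (EuclideanSpace.basisFun κ 𝕜).toMatrix_orthonormalBasis_mem_unitary b,
    fun j k hjk => ?_⟩
  have := hbf j k hjk
  rw [EuclideanSpace.inner_eq_star_dotProduct, dotProduct_comm] at this
  exact this

lemma exists_unitary_mul_mul_isDiag [DecidableEq κ] (C : Matrix κ κ 𝕜) :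
    ∃ X ∈ unitaryGroup κ 𝕜, ∃ V ∈ unitaryGroup κ 𝕜, (Xᴴ * C * V).IsDiag := by
  have hC : (Cᴴ * C).IsHermitian := isHermitian_conjTranspose_mul_self C
  let V : Matrix κ κ 𝕜 := hC.eigenvectorUnitary
  have hV : ((C * V)ᴴ * (C * V)).IsDiag := by
    have h := hC.conjStarAlgAut_star_eigenvectorUnitary
    rw [Unitary.conjStarAlgAut_star_apply] at h
    have : (C * V)ᴴ * (C * V) = diagonal (RCLike.ofReal ∘ hC.eigenvalues) := by
      rw [← h, conjTranspose_mul]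
      simp only [Matrix.mul_assoc]
      rfl
    rw [this]
    exact isDiag_diagonal _
  obtain ⟨X, hX, hXCV⟩ := exists_unitary_conjTranspose_mul_isDiag hV
  exact ⟨X, hX, V, hC.eigenvectorUnitary.2, by rwa [Matrix.mul_assoc]⟩

lemma exists_biorthogonal_factorization {A P : Matrix n n 𝕜} (hA : A.PosSemidef)
    (hP : P.PosSemidef) (hrA : A.rank ≤ Fintype.card κ) (hrP : P.rank ≤ Fintype.card κ) :
    ∃ Ψ W : Matrix n κ 𝕜, A = Ψ * Ψᴴ ∧ P = W * Wᴴ ∧ (Ψᴴ * W).IsDiag := by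
  classical
  have mul_unitary : ∀ (B : Matrix n κ 𝕜), ∀ X ∈ unitaryGroup κ 𝕜,
      B * Bᴴ = B * X * (B * X)ᴴ := fun B X hX => by
    rw [conjTranspose_mul, Matrix.mul_assoc, ← Matrix.mul_assoc X, ← star_eq_conjTranspose X,
      mem_unitaryGroup_iff.1 hX, Matrix.one_mul]
  obtain ⟨B, rfl⟩ := exists_eq_mul_conjTranspose_of_rank_le hA hrA
  obtain ⟨W, rfl⟩ := exists_eq_mul_conjTranspose_of_rank_le hP hrP
  obtain ⟨X, hX, V, hV, hdiag⟩ := exists_unitary_mul_mul_isDiag (Bᴴ * W)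
  refine ⟨B * X, W * V, mul_unitary B X hX, mul_unitary W V hV, ?_⟩
  simpa only [conjTranspose_mul, Matrix.mul_assoc] using hdiag

end Factorization

section Discrimination

variable {ι : Type} {n : ℕ} {A P : ι → Matrix (Fin n) (Fin n) ℂ} {K : Matrix (Fin n) (Fin n) ℂ}

/-- `K` certifies, by the Holevo–Yuen–Kennedy–Lax conditions, that the measurement `P` maximizes
`∑ i, Re tr (A i * P i)`; the operators `A i = pᵢρᵢ` are the weighted states of an ensemble. -/
structure IsLagrangeOperator (A P : ι → Matrix (Fin n) (Fin n) ℂ)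
    (K : Matrix (Fin n) (Fin n) ℂ) : Prop where
  posSemidef_sub : ∀ i, (K - A i).PosSemidef
  mul_eq_mul : ∀ i, K * P i = A i * P i

lemma sum_outer_col {κ : Type*} [Fintype κ] (B : Matrix (Fin n) κ ℂ) :
    ∑ j, outer (B.col j) = B * Bᴴ := by
  ext k l
  simp [outer, Matrix.sum_apply, vecMulVec_apply, mul_apply]

lemma outer_mulVec (x y : Fin n → ℂ) : outer x *ᵥ y = (star x ⬝ᵥ y) • x := by
  rw [outer, vecMulVec_mulVec, op_smul_eq_smul]

lemma outer_posSemidef (x : Fin n → ℂ) : (outer x).PosSemidef :=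
  posSemidef_vecMulVec_self_star x

namespace IsLagrangeOperator

lemma isUnit (hK : IsLagrangeOperator A P K) (hA : ∀ i, (A i).PosSemidef)
    (hspan : ⨆ i, LinearMap.range (A i).mulVecLin = ⊤) : IsUnit K := by
  rw [← mulVec_injective_iff_isUnit]
  refine (injective_iff_map_eq_zero K.mulVecLin).2 fun x (hx : K *ᵥ x = 0) => ?_
  have hAx (i : ι) : A i *ᵥ x = 0 := by
    have hle := (hK.posSemidef_sub i).dotProduct_mulVec_nonneg x
    rw [sub_mulVec, hx, zero_sub, dotProduct_neg, neg_nonneg] at hle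
    exact ((hA i).dotProduct_mulVec_zero_iff x).1
      (hle.antisymm ((hA i).dotProduct_mulVec_nonneg x))
  have hker : ⊤ ≤ LinearMap.ker (dotProductBilin ℂ ℂ (star x)) := by
    rw [← hspan, iSup_le_iff]
    rintro i _ ⟨y, rfl⟩
    have : star x ᵥ* A i = 0 := by rw [← (hA i).1.eq, ← star_mulVec, hAx, star_zero]
    rw [LinearMap.mem_ker, dotProductBilin_apply_apply, mulVecLin_apply, dotProduct_mulVec, this,
      zero_dotProduct]
  exact dotProduct_star_self_eq_zero.1 (hker Submodule.mem_top)

lemma rank_le (hK : IsLagrangeOperator A P K) (hunit : IsUnit K) (i : ι) :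
    (P i).rank ≤ (A i).rank := by
  rw [← rank_mul_eq_right_of_isUnit_det K (P i) ((isUnit_iff_isUnit_det K).1 hunit),
    hK.mul_eq_mul]
  exact rank_mul_le_left _ _

end IsLagrangeOperator

lemma orthonormal_of_sum_outer_eq_one {α : Type*} [Fintype α] [DecidableEq α]
    {w : α → Fin n → ℂ} (hcard : Fintype.card α = n) (hw : ∑ a, outer (w a) = 1) (a b : α) :
    star (w a) ⬝ᵥ w b = if a = b then 1 else 0 := by
  set W : Matrix (Fin n) α ℂ := of fun k a => w a k
  have hW : Wᴴ * W = 1 := by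
    rw [mul_eq_one_comm_of_card_eq _ _ _ (hcard.trans (Fintype.card_fin n).symm), ← sum_outer_col]
    exact hw
  rw [← one_apply, ← hW]
  rfl

lemma sum_outer_mulVec {κ : Type*} [Fintype κ] {ψ : κ → Fin n → ℂ} {x : Fin n → ℂ} {j : κ}
    (h : ∀ k, k ≠ j → star (ψ k) ⬝ᵥ x = 0) : (∑ k, outer (ψ k)) *ᵥ x = outer (ψ j) *ᵥ x := by
  rw [sum_mulVec, Finset.sum_eq_single_of_mem j (Finset.mem_univ j)]
  exact fun k _ hk => by rw [outer_mulVec, h k hk, zero_smul]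

lemma mul_outer (M : Matrix (Fin n) (Fin n) ℂ) (x : Fin n → ℂ) :
    M * outer x = vecMulVec (M *ᵥ x) (star x) :=
  mul_vecMulVec ..

namespace IsLagrangeOperator

variable {κ : ι → Type} [∀ i, Fintype (κ i)] [DecidableEq (Σ i, κ i)] {ψ w : (Σ i, κ i) → Fin n → ℂ}

lemma mulVec_eq_outer_mulVec (hK : IsLagrangeOperator A P K)
    (hA : ∀ i, A i = ∑ j, outer (ψ ⟨i, j⟩)) (hP : ∀ i, P i = ∑ j, outer (w ⟨i, j⟩))
    (hw : ∀ a b, star (w a) ⬝ᵥ w b = if a = b then 1 else 0)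
    (hψw : ∀ i j k, j ≠ k → star (ψ ⟨i, j⟩) ⬝ᵥ w ⟨i, k⟩ = 0) (a : Σ i, κ i) :
    K *ᵥ w a = outer (ψ a) *ᵥ w a := by
  obtain ⟨i, j⟩ := a
  have hPw : P i *ᵥ w ⟨i, j⟩ = w ⟨i, j⟩ := by
    rw [hP, sum_outer_mulVec fun k hk => by rw [hw, if_neg (by simpa using hk)], outer_mulVec, hw,
      if_pos rfl, one_smul]
  calc K *ᵥ w ⟨i, j⟩ = A i *ᵥ w ⟨i, j⟩ := by
        rw [← hPw, mulVec_mulVec, mulVec_mulVec, hK.mul_eq_mul]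
    _ = outer (ψ ⟨i, j⟩) *ᵥ w ⟨i, j⟩ := by
        rw [hA, sum_outer_mulVec fun k hk => hψw i k j hk]

lemma refine (hK : IsLagrangeOperator A P K)
    (hA : ∀ i, A i = ∑ j, outer (ψ ⟨i, j⟩)) (hP : ∀ i, P i = ∑ j, outer (w ⟨i, j⟩))
    (hw : ∀ a b, star (w a) ⬝ᵥ w b = if a = b then 1 else 0)
    (hψw : ∀ i j k, j ≠ k → star (ψ ⟨i, j⟩) ⬝ᵥ w ⟨i, k⟩ = 0) :
    IsLagrangeOperator (fun a => outer (ψ a)) (fun a => outer (w a)) K where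
  posSemidef_sub := fun ⟨i, j⟩ => by
    classical
    have hsub : (A i - outer (ψ ⟨i, j⟩)).PosSemidef := by
      rw [hA, ← Finset.sum_erase_eq_sub (Finset.mem_univ j)]
      exact posSemidef_sum _ fun k _ => outer_posSemidef _
    rw [← sub_add_sub_cancel]
    exact (hK.posSemidef_sub i).add hsub
  mul_eq_mul := fun a => by
    rw [mul_outer, mul_outer, hK.mulVec_eq_outer_mulVec hA hP hw hψw a]

end IsLagrangeOperator

lemma succProb_eq_trace [Fintype ι] (p : ι → ℝ) (ρ E : ι → Matrix (Fin n) (Fin n) ℂ) :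
    succProb p ρ E = (∑ i, (((p i : ℂ) • ρ i) * E i).trace).re := by
  simp only [succProb, Complex.re_sum, smul_mul, trace_smul, smul_eq_mul, Complex.re_ofReal_mul]

lemma IsLagrangeOperator.isOptimal [Fintype ι] {p : ι → ℝ} {ρ : ι → Matrix (Fin n) (Fin n) ℂ}
    (hK : IsLagrangeOperator (fun i => (p i : ℂ) • ρ i) P K) (hP : IsPOVM P) :
    IsOptimal p ρ P := by
  refine ⟨hP, fun E hE => ?_⟩
  have hPK : ∑ i, (((p i : ℂ) • ρ i) * P i).trace = K.trace := by
    simp only [← hK.mul_eq_mul]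
    rw [← trace_sum, ← Finset.mul_sum, hP.2, Matrix.mul_one]
  have hEK : K.trace = ∑ i, (K * E i).trace := by
    rw [← trace_sum, ← Finset.mul_sum, hE.2, Matrix.mul_one]
  rw [succProb_eq_trace, succProb_eq_trace, hPK, hEK]
  refine (Complex.le_def.1 (Finset.sum_le_sum fun i _ => ?_)).1
  rw [← sub_nonneg, ← trace_sub, ← Matrix.sub_mul]
  exact trace_mul_nonneg_of_posSemidef (hK.posSemidef_sub i) (hE.1 i)

end Discrimination

section Necessity

variable {ι : Type} [Fintype ι] {n : ℕ} {A P : ι → Matrix (Fin n) (Fin n) ℂ}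

/-- The Lagrange multiplier of a measurement `P` for the weighted states `A`, that is the Hermitian
part of `∑ i, A i * P i`: it is an `IsLagrangeOperator` as soon as `P` is optimal. -/
def lagrangeOperator (A P : ι → Matrix (Fin n) (Fin n) ℂ) : Matrix (Fin n) (Fin n) ℂ :=
  (2 : ℂ)⁻¹ • ∑ i, (A i * P i + P i * A i)

lemma lagrangeOperator_isHermitian (hA : ∀ i, (A i).IsHermitian) (hP : ∀ i, (P i).IsHermitian) :
    (lagrangeOperator A P).IsHermitian := by
  simp only [lagrangeOperator, IsHermitian, conjTranspose_smul, conjTranspose_sum,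
    conjTranspose_add, conjTranspose_mul, (hA _).eq, (hP _).eq, star_inv₀, star_ofNat]
  simp only [add_comm]

lemma trace_lagrangeOperator : (lagrangeOperator A P).trace = ∑ i, (A i * P i).trace := by
  simp only [lagrangeOperator, trace_smul, trace_sum, trace_add, trace_mul_comm (P _), ← two_mul,
    ← Finset.mul_sum, smul_eq_mul]
  exact inv_mul_cancel_left₀ two_ne_zero _

lemma trace_lagrangeOperator_mul (Q : Matrix (Fin n) (Fin n) ℂ) :
    2 * (lagrangeOperator A P * Q).trace
      = ∑ i, ((A i * (P i * Q)).trace + (A i * (Q * P i)).trace) := by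
  have hcycle (i : ι) : (P i * A i * Q).trace = (A i * (Q * P i)).trace := by
    rw [Matrix.mul_assoc, trace_mul_comm, Matrix.mul_assoc]
  simp only [lagrangeOperator, smul_mul, trace_smul, Finset.sum_mul, trace_sum, Matrix.add_mul,
    trace_add, hcycle, Matrix.mul_assoc (A _), smul_eq_mul]
  exact mul_inv_cancel_left₀ two_ne_zero _

/-- The measurement `P` preceded by the contraction `M`, where the weight `1 - Mᴴ * M` that is lost
is credited to the outcome `j`: the perturbation against which an optimal `P` is tested. -/
def transferTo [DecidableEq ι] (P : ι → Matrix (Fin n) (Fin n) ℂ) (M : Matrix (Fin n) (Fin n) ℂ)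
    (j i : ι) : Matrix (Fin n) (Fin n) ℂ :=
  Mᴴ * P i * M + if i = j then 1 - Mᴴ * M else 0

lemma IsPOVM.transferTo [DecidableEq ι] (hP : IsPOVM P) {M : Matrix (Fin n) (Fin n) ℂ}
    (hM : (1 - Mᴴ * M).PosSemidef) (j : ι) : IsPOVM (transferTo P M j) := by
  refine ⟨fun i => ((hP.1 i).conjTranspose_mul_mul_same M).add ?_, ?_⟩
  · split_ifs
    exacts [hM, .zero]
  · simp only [_root_.transferTo]
    rw [Finset.sum_add_distrib, ← Finset.sum_mul, ← Finset.mul_sum, hP.2, Finset.sum_ite_eq',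
      if_pos (Finset.mem_univ j), Matrix.mul_one, add_sub_cancel]

lemma sum_trace_mul_transferTo [DecidableEq ι] (M : Matrix (Fin n) (Fin n) ℂ) (j : ι) :
    ∑ i, (A i * transferTo P M j i).trace
      = ∑ i, (A i * (Mᴴ * P i * M)).trace + (A j * (1 - Mᴴ * M)).trace := by
  simp only [transferTo, Matrix.mul_add, trace_add, Finset.sum_add_distrib, mul_ite,
    Matrix.mul_zero, apply_ite trace, trace_zero, Finset.sum_ite_eq', Finset.mem_univ, if_true]

lemma sum_trace_mul_transferTo_one_sub_smul [DecidableEq ι] {Q : Matrix (Fin n) (Fin n) ℂ}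
    (hQ : Q.IsHermitian) (j : ι) (ε : ℝ) :
    ∑ i, (A i * transferTo P (1 - (ε : ℂ) • Q) j i).trace
      = ∑ i, (A i * P i).trace + ε * (2 * ((A j - lagrangeOperator A P) * Q).trace)
        + ε ^ 2 * (∑ i, (A i * (Q * P i * Q)).trace - (A j * (Q * Q)).trace) := by
  have hM : (1 - (ε : ℂ) • Q)ᴴ = 1 - (ε : ℂ) • Q := by
    simp [conjTranspose_sub, conjTranspose_smul, hQ.eq]
  have hconj (i : ι) : (A i * ((1 - (ε : ℂ) • Q) * P i * (1 - (ε : ℂ) • Q))).trace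
      = (A i * P i).trace - ε * ((A i * (P i * Q)).trace + (A i * (Q * P i)).trace)
        + ε ^ 2 * (A i * (Q * P i * Q)).trace := by
    simp only [Matrix.mul_sub, Matrix.sub_mul, Matrix.one_mul, Matrix.mul_one, Matrix.smul_mul,
      Matrix.mul_smul, trace_sub, trace_smul, smul_eq_mul]
    ring
  have hsq : (A j * (1 - (1 - (ε : ℂ) • Q) * (1 - (ε : ℂ) • Q))).trace
      = 2 * ε * (A j * Q).trace - ε ^ 2 * (A j * (Q * Q)).trace := by
    simp only [Matrix.mul_sub, Matrix.sub_mul, Matrix.one_mul, Matrix.mul_one, Matrix.smul_mul,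
      Matrix.mul_smul, trace_sub, trace_smul, smul_eq_mul]
    ring
  rw [sum_trace_mul_transferTo, hM, hsq, Finset.sum_congr rfl fun i _ => hconj i,
    Finset.sum_add_distrib, Finset.sum_sub_distrib, ← Finset.mul_sum, ← Finset.mul_sum,
    ← trace_lagrangeOperator_mul, Matrix.sub_mul, trace_sub]
  ring

lemma nonpos_of_forall_mul_add_sq_mul_nonpos {a b : ℝ}
    (h : ∀ ε ∈ Set.Ioo (0 : ℝ) 1, ε * a + ε ^ 2 * b ≤ 0) : a ≤ 0 := by
  have hlim : Filter.Tendsto (fun ε : ℝ => a + ε * b) (nhdsWithin 0 (Set.Ioi 0)) (nhds a) :=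
    tendsto_nhdsWithin_of_tendsto_nhds <| Continuous.tendsto' (by fun_prop) _ _ (by simp)
  refine le_of_tendsto hlim ?_
  filter_upwards [Ioo_mem_nhdsGT one_pos] with ε hε
  refine nonpos_of_mul_nonpos_right ?_ hε.1
  linarith [h ε hε]

lemma IsOptimal.re_trace_lagrangeOperator_sub_mul_nonneg {p : ι → ℝ}
    {ρ : ι → Matrix (Fin n) (Fin n) ℂ} (hopt : IsOptimal p ρ P) {Q : Matrix (Fin n) (Fin n) ℂ}
    (hQ : IsStarProjection Q) (j : ι) :
    0 ≤ ((lagrangeOperator (fun i => (p i : ℂ) • ρ i) P - (p j : ℂ) • ρ j) * Q).trace.re := by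
  classical
  have hQh : Q.IsHermitian := hQ.isSelfAdjoint
  have hQpos : Q.PosSemidef := by
    rw [← hQ.isIdempotentElem.eq]
    nth_rw 1 [← hQh.eq]
    exact posSemidef_conjTranspose_mul_self Q
  have hcontr (ε : ℝ) (hε : ε ∈ Set.Ioo (0 : ℝ) 1) :
      (1 - (1 - (ε : ℂ) • Q)ᴴ * (1 - (ε : ℂ) • Q)).PosSemidef := by
    have heq : 1 - (1 - (ε : ℂ) • Q)ᴴ * (1 - (ε : ℂ) • Q) = ((2 * ε - ε ^ 2 : ℝ) : ℂ) • Q := by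
      rw [conjTranspose_sub, conjTranspose_one, conjTranspose_smul, hQh.eq, RCLike.star_def,
        Complex.conj_ofReal]
      simp only [Matrix.mul_sub, Matrix.sub_mul, Matrix.one_mul, Matrix.mul_one, Matrix.smul_mul,
        Matrix.mul_smul, hQ.isIdempotentElem.eq]
      push_cast
      module
    rw [heq]
    exact hQpos.smul (Complex.zero_le_real.2 (by nlinarith [hε.1, hε.2]))
  have hle := nonpos_of_forall_mul_add_sq_mul_nonpos fun ε hε => by
    have h := hopt.2 _ (hopt.1.transferTo (hcontr ε hε) j)
    rw [succProb_eq_trace, succProb_eq_trace, sum_trace_mul_transferTo_one_sub_smul hQh,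
      add_assoc, Complex.add_re, add_le_iff_nonpos_right, Complex.add_re, Complex.re_ofReal_mul,
      ← Complex.ofReal_pow, Complex.re_ofReal_mul] at h
    exact h
  rw [← neg_sub, Matrix.neg_mul, trace_neg, Complex.neg_re, neg_nonneg]
  rw [two_mul, Complex.add_re] at hle
  linarith

lemma IsOptimal.isLagrangeOperator_lagrangeOperator {p : ι → ℝ}
    {ρ : ι → Matrix (Fin n) (Fin n) ℂ} (hρ : ∀ i, (ρ i).IsHermitian) (hopt : IsOptimal p ρ P) :
    IsLagrangeOperator (fun i => (p i : ℂ) • ρ i) P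
      (lagrangeOperator (fun i => (p i : ℂ) • ρ i) P) := by
  set A := fun i => (p i : ℂ) • ρ i
  set K := lagrangeOperator A P
  have hA (i : ι) : (A i).IsHermitian := by
    rw [IsHermitian, conjTranspose_smul, (hρ i).eq, RCLike.star_def, Complex.conj_ofReal]
  have hK : K.IsHermitian := lagrangeOperator_isHermitian hA fun i => (hopt.1.1 i).1
  have hsub (i : ι) : (K - A i).PosSemidef :=
    posSemidef_of_forall_isStarProjection (hK.sub (hA i)) fun Q hQ =>
      hopt.re_trace_lagrangeOperator_sub_mul_nonneg hQ i
  have hsum : ∑ i, ((K - A i) * P i).trace = 0 := by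
    simp only [Matrix.sub_mul, trace_sub, Finset.sum_sub_distrib]
    rw [← trace_sum, ← Finset.mul_sum, hopt.1.2, Matrix.mul_one, trace_lagrangeOperator, sub_self]
  refine ⟨hsub, fun i => ?_⟩
  have hzero := (Finset.sum_eq_zero_iff_of_nonneg fun i _ =>
    trace_mul_nonneg_of_posSemidef (hsub i) (hopt.1.1 i)).1 hsum i (Finset.mem_univ i)
  rwa [trace_mul_eq_zero_iff_of_posSemidef (hsub i) (hopt.1.1 i), Matrix.sub_mul,
    sub_eq_zero] at hzero

end Necessity

section Refinement

variable {ι : Type} [Fintype ι] [DecidableEq ι] {n : ℕ} {A P : ι → Matrix (Fin n) (Fin n) ℂ}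

lemma IsLagrangeOperator.exists_refinement {K : Matrix (Fin n) (Fin n) ℂ}
    (hK : IsLagrangeOperator A P K) (hA : ∀ i, (A i).PosSemidef) (hP : IsPOVM P)
    (hspan : ⨆ i, LinearMap.range (A i).mulVecLin = ⊤) {r : ι → ℕ} (hr : ∀ i, (A i).rank = r i)
    (hsum : ∑ i, r i = n) :
    ∃ ψ w : (Σ i, Fin (r i)) → Fin n → ℂ,
      (∀ a, ψ a ≠ 0) ∧
      (∀ i, A i = ∑ j, outer (ψ ⟨i, j⟩)) ∧
      (∀ a b, star (w a) ⬝ᵥ w b = if a = b then 1 else 0) ∧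
      (∀ i, P i = ∑ j, outer (w ⟨i, j⟩)) ∧
      IsLagrangeOperator (fun a => outer (ψ a)) (fun a => outer (w a)) K := by
  have hunit := hK.isUnit hA hspan
  choose Ψ W hΨ hW hdiag using fun i => exists_biorthogonal_factorization (κ := Fin (r i))
    (hA i) (hP.1 i) (by rw [hr, Fintype.card_fin])
    ((hK.rank_le hunit i).trans_eq (by rw [hr, Fintype.card_fin]))
  let ψ (a : Σ i, Fin (r i)) : Fin n → ℂ := (Ψ a.1).col a.2
  let w (a : Σ i, Fin (r i)) : Fin n → ℂ := (W a.1).col a.2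
  have hAψ (i : ι) : A i = ∑ j, outer (ψ ⟨i, j⟩) := (hΨ i).trans (sum_outer_col _).symm
  have hPw (i : ι) : P i = ∑ j, outer (w ⟨i, j⟩) := (hW i).trans (sum_outer_col _).symm
  have hψw (i : ι) (j k : Fin (r i)) (hjk : j ≠ k) : star (ψ ⟨i, j⟩) ⬝ᵥ w ⟨i, k⟩ = 0 :=
    hdiag i hjk
  have hw := orthonormal_of_sum_outer_eq_one (w := w) (by simpa using hsum) <| by
    simpa only [Fintype.sum_sigma, ← hPw] using hP.2
  refine ⟨ψ, w, fun a hψ => ?_, hAψ, hw, hPw, hK.refine hAψ hPw hw hψw⟩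
  have hKw : K *ᵥ w a = 0 := by
    rw [hK.mulVec_eq_outer_mulVec hAψ hPw hw hψw, outer_mulVec, hψ, smul_zero]
  have hwa : w a = 0 := mulVec_injective_of_isUnit hunit (hKw.trans (mulVec_zero K).symm)
  simpa [hwa] using hw a a

lemma range_mulVecLin_smul {𝕜 k l : Type*} [Field 𝕜] [Fintype l] {c : 𝕜} (hc : c ≠ 0)
    (M : Matrix k l 𝕜) :
    LinearMap.range (c • M).mulVecLin = LinearMap.range M.mulVecLin := by
  rw [← LinearMap.range_smul M.mulVecLin c hc]
  exact congrArg LinearMap.range (LinearMap.ext fun x => smul_mulVec c M x)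

lemma ofReal_smul_inv_smul_outer {ψ : Fin n → ℂ} (hψ : ψ ≠ 0) :
    (((star ψ ⬝ᵥ ψ).re : ℝ) : ℂ) • (((star ψ ⬝ᵥ ψ).re : ℝ) : ℂ)⁻¹ • outer ψ = outer ψ := by
  refine smul_inv_smul₀ (Complex.ofReal_ne_zero.2 fun h => hψ ?_) _
  exact dotProduct_star_self_eq_zero.1 <|
    Complex.ext h (Complex.le_def.1 (dotProduct_star_self_nonneg ψ)).2.symm

lemma IsLagrangeOperator.isOptimal_outer {α : Type} [Fintype α] {ψ w : α → Fin n → ℂ}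
    {K : Matrix (Fin n) (Fin n) ℂ}
    (hK : IsLagrangeOperator (fun a => outer (ψ a)) (fun a => outer (w a)) K)
    (hψ : ∀ a, ψ a ≠ 0) (hw : IsPOVM fun a => outer (w a)) :
    IsOptimal (fun a => (star (ψ a) ⬝ᵥ ψ a).re)
      (fun a => (((star (ψ a) ⬝ᵥ ψ a).re : ℝ) : ℂ)⁻¹ • outer (ψ a)) (fun a => outer (w a)) :=
  IsLagrangeOperator.isOptimal (K := K)
    (by simpa only [ofReal_smul_inv_smul_outer (hψ _)] using hK) hw

end Refinement

theorem stmt_17_general {ι : Type} [Fintype ι] [DecidableEq ι] {n : ℕ} (p : ι → ℝ)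
    (ρ : ι → Matrix (Fin n) (Fin n) ℂ) (hp : ∀ i, 0 < p i) (hρ : ∀ i, (ρ i).PosSemidef)
    (hrank : ∑ i, (ρ i).rank = n) (hspan : ⨆ i, LinearMap.range (ρ i).mulVecLin = ⊤)
    (r : ι → ℕ) (hr : ∀ i, (ρ i).rank = r i)
    (P : ι → Matrix (Fin n) (Fin n) ℂ) (hopt : IsOptimal p ρ P) :
    ∃ ψ w : (Σ i, Fin (r i)) → Fin n → ℂ,
      (∀ a, ψ a ≠ 0) ∧
      (∀ i, (p i : ℂ) • ρ i = ∑ j, outer (ψ ⟨i, j⟩)) ∧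
      (∀ a b, star (w a) ⬝ᵥ w b = if a = b then 1 else 0) ∧
      (∀ i, P i = ∑ j, outer (w ⟨i, j⟩)) ∧
      IsOptimal (fun a => (star (ψ a) ⬝ᵥ ψ a).re)
        (fun a => (((star (ψ a) ⬝ᵥ ψ a).re : ℝ) : ℂ)⁻¹ • outer (ψ a))
        (fun a => outer (w a)) := by
  have hp' (i : ι) : (p i : ℂ) ≠ 0 := Complex.ofReal_ne_zero.2 (hp i).ne'
  have hA (i : ι) : ((p i : ℂ) • ρ i).PosSemidef :=
    (hρ i).smul (Complex.zero_le_real.2 (hp i).le)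
  have hrA (i : ι) : ((p i : ℂ) • ρ i).rank = r i := by
    rw [rank_smul_of_mem_nonZeroDivisors _ (mem_nonZeroDivisors_of_ne_zero (hp' i)), hr]
  have hspanA : ⨆ i, LinearMap.range ((p i : ℂ) • ρ i).mulVecLin = ⊤ := by
    simpa only [range_mulVecLin_smul (hp' _)] using hspan
  have hK := hopt.isLagrangeOperator_lagrangeOperator fun i => (hρ i).1
  obtain ⟨ψ, w, hψ, hAψ, hw, hPw, hKψw⟩ :=
    hK.exists_refinement hA hopt.1 hspanA hrA (by simpa only [hr] using hrank)
  have hpovm : IsPOVM fun a => outer (w a) := by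
    refine ⟨fun a => outer_posSemidef (w a), ?_⟩
    rw [Fintype.sum_sigma, ← hopt.1.2]
    exact Finset.sum_congr rfl fun i _ => (hPw i).symm
  exact ⟨ψ, w, hψ, hAψ, hw, hPw, hKψw.isOptimal_outer hψ hpovm⟩

/-- For an LI ensemble with optimal POVM `(Πᵢ)`, there are pure-state decompositions
`pᵢρᵢ = ∑ⱼ ψᵢⱼψᵢⱼ*` and `Πᵢ = ∑ⱼ wᵢⱼwᵢⱼ*` (with `(wᵢⱼ)` orthonormal) such that the
rank-one POVM `(wᵢⱼwᵢⱼ*)` is optimal for the pure-state ensemble with states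
`ψᵢⱼ/‖ψᵢⱼ‖` and probabilities `‖ψᵢⱼ‖²`. -/
theorem stmt_17 {m n : ℕ} (p : Fin m → ℝ) (ρ : Fin m → Matrix (Fin n) (Fin n) ℂ)
    (hens : IsLIEnsemble p ρ)
    (r : Fin m → ℕ) (hr : ∀ i, (ρ i).rank = r i)
    (P : Fin m → Matrix (Fin n) (Fin n) ℂ) (hopt : IsOptimal p ρ P) :
    ∃ ψ w : ((i : Fin m) × Fin (r i)) → (Fin n → ℂ),
      (∀ a, ψ a ≠ 0) ∧
      (∀ i, (p i : ℂ) • ρ i = ∑ j : Fin (r i), outer (ψ ⟨i, j⟩)) ∧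
      (∀ a b, star (w a) ⬝ᵥ w b = if a = b then 1 else 0) ∧
      (∀ i, P i = ∑ j : Fin (r i), outer (w ⟨i, j⟩)) ∧
      IsOptimal (fun a => (star (ψ a) ⬝ᵥ ψ a).re)
        (fun a => (((star (ψ a) ⬝ᵥ ψ a).re : ℝ) : ℂ)⁻¹ • outer (ψ a))
        (fun a => outer (w a)) :=
  stmt_17_general p ρ hens.1.1 hens.1.2.2.1 hens.2.1 hens.2.2 r hr P hopt
end
end

section
/- Let (p_i, ρ_i)_{i=1}^m be a linearly independent (LI) ensemble on ℂ^n with r_i = rank ρ_i, and let ψ_{ij} ∈ ℂ^n (1 ≤ i ≤ m, 1 ≤ j ≤ r_i) be vectors forming a basis of ℂ^n with p_iρ_i = ∑_{j=1}^{r_i} ψ_{ij}ψ_{ij}* for each i. Let G be the n×n Gram matrix of the ψ_{ij} (entries ⟨ψ_{i₁j₁}, ψ_{i₂j₂}⟩, conjugate-linear in the first argument, indices ordered by groups i) and let G^{1/2} be its positive definite square root. If there exists λ > 0 such that the i-th r_i×r_i diagonal block of G^{1/2} equals λ·I_{r_i} for every i (equivalently, all eigenvalues of all the diagonal blocks of G^{1/2}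 are equal), then the pretty good measurement of (p_i, ρ_i) is an optimal POVM for its minimum error discrimination. -/
open Matrix
open scoped ComplexOrder

noncomputable section

/-!
Let `A` be the matrix with columns `ψ i j` and `A i` its `i`-th block of columns, so that
`p i • ρ i = A i * (A i)ᴴ`, and let `R = (A * Aᴴ)^{1/2}`. Then `G^{1/2} = Aᴴ * R⁻¹ * A`, with
diagonal blocks `(A i)ᴴ * R⁻¹ * A i`. If all these blocks equal `λ • 1`, taking Schur complements
gives `p i • ρ i ≤ λ • R`, so `λ • R` is feasible for the dual semidefinite program of minimum error
discrimination. The pretty good measurement satisfies complementary slackness with this dual point,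
so it is optimal.
-/

open scoped MatrixOrder

section Loewner

variable {m k 𝕜 : Type*} [Fintype m] [Fintype k] [RCLike 𝕜]

lemma re_trace_mul_le_re_trace_mul {A B E : Matrix m m 𝕜} (hAB : A ≤ B) (hE : 0 ≤ E) :
    RCLike.re (A * E).trace ≤ RCLike.re (B * E).trace := by
  classical
  obtain ⟨C, rfl⟩ := CStarAlgebra.nonneg_iff_eq_star_mul_self.mp hE
  have trace_mul_eq (M : Matrix m m 𝕜) : (M * (star C * C)).trace = (C * M * Cᴴ).trace := by
    rw [star_eq_conjTranspose, ← Matrix.mul_assoc, trace_mul_comm, Matrix.mul_assoc]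
  have hconj := ((le_iff.mp hAB).mul_mul_conjTranspose_same C).trace_nonneg
  rw [Matrix.mul_sub, Matrix.sub_mul, trace_sub, sub_nonneg] at hconj
  simpa only [trace_mul_eq] using (RCLike.le_iff_re_im.mp hconj).1

/-- By the two Schur complements, each side says that `[[R, B], [Bᴴ, c • 1]]` is positive
semidefinite. -/
lemma mul_conjTranspose_le_smul_iff [DecidableEq m] [DecidableEq k] {R : Matrix m m 𝕜}
    (hR : R.PosDef) (B : Matrix m k 𝕜) {c : ℝ} (hc : 0 < c) :
    B * Bᴴ ≤ c • R ↔ Bᴴ * R⁻¹ * B ≤ c • 1 := by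
  have hD : (c • (1 : Matrix k k 𝕜)).PosDef := PosDef.one.smul hc
  have hD_inv : (c • (1 : Matrix k k 𝕜))⁻¹ = c⁻¹ • 1 :=
    inv_eq_right_inv (by simp [smul_smul, hc.ne'])
  let := hR.isUnit.invertible
  let := hD.isUnit.invertible
  have hscale : c • R - B * Bᴴ = c • (R - B * (c • (1 : Matrix k k 𝕜))⁻¹ * Bᴴ) := by
    simp [hD_inv, smul_sub, smul_smul, hc.ne']
  rw [le_iff, le_iff, ← PosDef.fromBlocks₁₁ B _ hR, PosDef.fromBlocks₂₂ R B hD, hscale]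
  refine ⟨fun h ↦ ?_, fun h ↦ h.smul hc.le⟩
  simpa [smul_smul, hc.ne'] using h.smul (inv_nonneg.mpr hc.le)

lemma eq_conjTranspose_mul_inv_mul_of_mul_self [DecidableEq m] {A : Matrix m k 𝕜}
    {R : Matrix m m 𝕜} {X : Matrix k k 𝕜} (hR : R.PosDef) (hX : X.PosSemidef)
    (hRR : R * R = A * Aᴴ) (hXX : X * X = Aᴴ * A) : X = Aᴴ * R⁻¹ * A := by
  classical
  have hY : (Aᴴ * R⁻¹ * A).PosSemidef := hR.inv.posSemidef.conjTranspose_mul_mul_same A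
  refine (CFC.mul_self_eq_mul_self_iff _ _ hX.nonneg hY.nonneg).mp ?_
  let := hR.isUnit.invertible
  calc X * X = Aᴴ * (R⁻¹ * (R * R) * R⁻¹) * A := by simp [hXX]
    _ = Aᴴ * R⁻¹ * A * (Aᴴ * R⁻¹ * A) := by simp only [hRR, Matrix.mul_assoc]

end Loewner

section SynthesisMatrix

variable {n κ : Type*}

/-- The matrix with columns `ψ a` (the synthesis operator of the family `ψ`), through which the
Gram matrix is `Aᴴ * A` and the sum of the outer products `ψ a (ψ a)*` is `A * Aᴴ`. -/
def synthesisMatrix (ψ : κ → n → ℂ) : Matrix n κ ℂ :=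
  (Matrix.of ψ)ᵀ

lemma conjTranspose_synthesisMatrix_mul_self [Fintype n] (ψ : κ → n → ℂ) :
    (synthesisMatrix ψ)ᴴ * synthesisMatrix ψ = Matrix.of fun a b ↦ star (ψ a) ⬝ᵥ ψ b :=
  rfl

lemma sum_outer [Fintype κ] {d : ℕ} (ψ : κ → Fin d → ℂ) :
    ∑ a, outer (ψ a) = synthesisMatrix ψ * (synthesisMatrix ψ)ᴴ := by
  ext x y
  simp [Matrix.sum_apply, Matrix.mul_apply, outer, synthesisMatrix, vecMulVec_apply]

lemma blockDiag'_conjTranspose_synthesisMatrix_mul_mul [Fintype n] {ι : Type*} {κ : ι → Type*}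
    (ψ : (Σ i, κ i) → n → ℂ) (M : Matrix n n ℂ) (i : ι) :
    ((synthesisMatrix ψ)ᴴ * M * synthesisMatrix ψ).blockDiag' i =
      (synthesisMatrix fun j ↦ ψ ⟨i, j⟩)ᴴ * M * synthesisMatrix fun j ↦ ψ ⟨i, j⟩ :=
  rfl

end SynthesisMatrix

section Optimality

variable {ι : Type} [Fintype ι] {n : ℕ} {p : ι → ℝ} {ρ E : ι → Matrix (Fin n) (Fin n) ℂ}

lemma succProb_eq_sum_re_trace (p : ι → ℝ) (ρ E : ι → Matrix (Fin n) (Fin n) ℂ) :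
    succProb p ρ E = ∑ i, (((p i : ℂ) • ρ i) * E i).trace.re := by
  simp [succProb]

lemma IsPOVM.sum_re_trace_mul (hE : IsPOVM E) (K : Matrix (Fin n) (Fin n) ℂ) :
    ∑ i, (K * E i).trace.re = K.trace.re := by
  rw [← Complex.re_sum, ← trace_sum, ← Finset.mul_sum, hE.2, Matrix.mul_one]

/-- Weak duality for the semidefinite program of minimum error discrimination: `K` is a dual
feasible point, with dual objective `tr K`. -/
lemma IsPOVM.succProb_le_of_forall_le (hE : IsPOVM E) {K : Matrix (Fin n) (Fin n) ℂ}
    (hK : ∀ i, (p i : ℂ) • ρ i ≤ K) : succProb p ρ E ≤ K.trace.re := by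
  rw [succProb_eq_sum_re_trace, ← hE.sum_re_trace_mul K]
  exact Finset.sum_le_sum fun i _ ↦ re_trace_mul_le_re_trace_mul (hK i) (hE.1 i).nonneg

lemma isPOVM_inv_mul_mul_inv {W : ι → Matrix (Fin n) (Fin n) ℂ} {R : Matrix (Fin n) (Fin n) ℂ}
    (hW : ∀ i, (W i).PosSemidef) (hR : R.PosDef) (hRR : R * R = ∑ i, W i) :
    IsPOVM fun i ↦ R⁻¹ * W i * R⁻¹ := by
  let := hR.isUnit.invertible
  refine ⟨fun i ↦ ?_, ?_⟩
  · simpa only [hR.inv.isHermitian.eq] using (hW i).conjTranspose_mul_mul_same R⁻¹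
  · rw [← Finset.sum_mul, ← Finset.mul_sum, ← hRR]
    simp

theorem isOptimal_pgm_of_conjTranspose_mul_inv_mul_eq {κ : ι → Type*} [∀ i, Fintype (κ i)]
    [∀ i, DecidableEq (κ i)] {A : ∀ i, Matrix (Fin n) (κ i) ℂ} {R : Matrix (Fin n) (Fin n) ℂ}
    {lam : ℝ} (hA : ∀ i, (p i : ℂ) • ρ i = A i * (A i)ᴴ) (hR : R.PosDef)
    (hRR : R * R = ∑ i, (p i : ℂ) • ρ i) (hlam : 0 < lam)
    (hblock : ∀ i, (A i)ᴴ * R⁻¹ * A i = lam • 1) :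
    IsOptimal p ρ fun i ↦ R⁻¹ * ((p i : ℂ) • ρ i) * R⁻¹ := by
  have hpovm : IsPOVM fun i ↦ R⁻¹ * ((p i : ℂ) • ρ i) * R⁻¹ :=
    isPOVM_inv_mul_mul_inv (fun i ↦ hA i ▸ posSemidef_self_mul_conjTranspose (A i)) hR hRR
  have hfeasible (i : ι) : (p i : ℂ) • ρ i ≤ lam • R :=
    hA i ▸ (mul_conjTranspose_le_smul_iff hR (A i) hlam).mpr (hblock i).le
  have hslack (i : ι) : ((p i : ℂ) • ρ i) * (R⁻¹ * ((p i : ℂ) • ρ i) * R⁻¹) =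
      (lam • R) * (R⁻¹ * ((p i : ℂ) • ρ i) * R⁻¹) := by
    let := hR.isUnit.invertible
    rw [hA]
    calc A i * (A i)ᴴ * (R⁻¹ * (A i * (A i)ᴴ) * R⁻¹)
        = A i * ((A i)ᴴ * R⁻¹ * A i) * (A i)ᴴ * R⁻¹ := by simp only [Matrix.mul_assoc]
      _ = lam • R * (R⁻¹ * (A i * (A i)ᴴ) * R⁻¹) := by simp [hblock, Matrix.mul_assoc]
  refine ⟨hpovm, fun F hF ↦ (hF.succProb_le_of_forall_le hfeasible).trans_eq ?_⟩
  simp only [succProb_eq_sum_re_trace, hslack, hpovm.sum_re_trace_mul]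

theorem stmt_18_general {κ : ι → Type*} [∀ i, Fintype (κ i)] [∀ i, DecidableEq (κ i)]
    {ψ : (Σ i, κ i) → Fin n → ℂ} (hdec : ∀ i, (p i : ℂ) • ρ i = ∑ j, outer (ψ ⟨i, j⟩))
    {X : Matrix (Σ i, κ i) (Σ i, κ i) ℂ} (hX : X.PosSemidef)
    (hXX : X * X = Matrix.of fun a b ↦ star (ψ a) ⬝ᵥ ψ b) {lam : ℝ} (hlam : 0 < lam)
    (hblock : ∀ i, X.blockDiag' i = lam • 1) {R : Matrix (Fin n) (Fin n) ℂ} (hR : R.PosDef)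
    (hRR : R * R = ∑ i, (p i : ℂ) • ρ i) :
    IsOptimal p ρ fun i ↦ R⁻¹ * ((p i : ℂ) • ρ i) * R⁻¹ := by
  have hframe : R * R = synthesisMatrix ψ * (synthesisMatrix ψ)ᴴ := by
    simp only [hRR, hdec, ← sum_outer, Fintype.sum_sigma]
  have hXeq : X = (synthesisMatrix ψ)ᴴ * R⁻¹ * synthesisMatrix ψ :=
    eq_conjTranspose_mul_inv_mul_of_mul_self hR hX hframe
      (hXX.trans (conjTranspose_synthesisMatrix_mul_self ψ).symm)
  refine isOptimal_pgm_of_conjTranspose_mul_inv_mul_eq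
    (fun i ↦ (hdec i).trans (sum_outer _)) hR hRR hlam fun i ↦ ?_
  rw [← blockDiag'_conjTranspose_synthesisMatrix_mul_mul, ← hXeq, hblock]

end Optimality

/-- If all diagonal blocks of `G^{1/2}` (Gram matrix of a pure-state decomposition of
an LI ensemble) equal `λ·I`, then the pretty good measurement of the ensemble is an
optimal POVM for its minimum error discrimination. -/
theorem stmt_18 {m n : ℕ} (p : Fin m → ℝ) (ρ : Fin m → Matrix (Fin n) (Fin n) ℂ)
    (hens : IsLIEnsemble p ρ)
    (r : Fin m → ℕ) (hr : ∀ i, (ρ i).rank = r i)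
    (ψ : ((i : Fin m) × Fin (r i)) → (Fin n → ℂ))
    (hli : LinearIndependent ℂ ψ) (hsp : Submodule.span ℂ (Set.range ψ) = ⊤)
    (hdec : ∀ i, (p i : ℂ) • ρ i = ∑ j : Fin (r i), outer (ψ ⟨i, j⟩))
    (G : Matrix ((i : Fin m) × Fin (r i)) ((i : Fin m) × Fin (r i)) ℂ)
    (hG : ∀ a b, G a b = star (ψ a) ⬝ᵥ ψ b)
    (RG : Matrix ((i : Fin m) × Fin (r i)) ((i : Fin m) × Fin (r i)) ℂ)
    (hRG : RG.PosDef) (hRG2 : RG * RG = G)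
    (lam : ℝ) (hlam : 0 < lam)
    (hblock : ∀ (i : Fin m) (a b : Fin (r i)),
      RG ⟨i, a⟩ ⟨i, b⟩ = if a = b then (lam : ℂ) else 0) :
    PGMIsOptimal p ρ p ρ := by
  intro R hR hRR
  exact stmt_18_general hdec hRG.posSemidef (hRG2.trans (ext hG)) hlam
    (fun i ↦ ext fun a b ↦ by simp [blockDiag'_apply, hblock, one_apply]) hR hRR
end
end

section
/- Let (p_i, ρ_i)_{i=1}^m be a linearly independent (LI) ensemble on ℂ^n with r_i = rank ρ_i, and let ψ_{ij} ∈ ℂ^n (1 ≤ i ≤ m, 1 ≤ j ≤ r_i) be vectors forming a basis of ℂ^n with p_iρ_i = ∑_{j=1}^{r_i} ψ_{ij}ψ_{ij}* for each i. Let G be the n×n Gram matrix of the ψ_{ij} (entries ⟨ψ_{i₁j₁}, ψ_{i₂j₂}⟩, conjugate-linear in the first argument, indices ordered by groups i), let G^{1/2} be its positive definite square root, and let H^{(ii)} denote the i-th r_i×r_i diagonal block of G^{1/2}. Define χ_{ij} = ∑_{k=1}^{r_i} (H^{(ii)})_{kj} ψ_{ik}, N = ∑_{i,j} ‖χ_{ij}‖²,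 and the matrices T_i = (1/N) ∑_{j=1}^{r_i} χ_{ij}χ_{ij}*. Then T_i = p_iρ_i for all i if and only if there exists λ > 0 with H^{(ii)} = λ·I_{r_i} for every i (equivalently, all eigenvalues of all the diagonal blocks of G^{1/2} are equal); and in that case the pretty good measurement of (p_i, ρ_i) is an optimal POVM for its minimum error discrimination. -/
open Matrix
open scoped ComplexOrder

noncomputable section

/-!
Let `Aᵢ` have the columns `ψᵢⱼ` and let `Hᵢ` be the `i`-th diagonal block of `G^{1/2}`, so that
`pᵢρᵢ = AᵢAᵢ*` and `Tᵢ = N⁻¹ (AᵢHᵢ)(AᵢHᵢ)*` with `N` the total trace of the matrices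
`(AᵢHᵢ)(AᵢHᵢ)*`. The matrices `AᵢAᵢ*` have total trace `1`, so `Tᵢ = pᵢρᵢ` for all `i` says that
`AᵢHᵢ²Aᵢ* = λ² AᵢAᵢ*` for a common `λ > 0`; the columns of `Aᵢ` being independent, this means
`Hᵢ² = λ²`, that is `Hᵢ = λ`.

For the pretty good measurement put `S = ∑ᵢ pᵢρᵢ` and let `Ψ` have all the `ψᵢⱼ` as columns. Then
`S = ΨΨ*` and `G = Ψ*Ψ`, so `Ψ* S^{-1/2} Ψ` is a positive semidefinite square root of `G`, whence
`Aᵢ* S^{-1/2} Aᵢ = Hᵢ`. If all `Hᵢ` equal `λ`, a Schur complement gives `AᵢAᵢ* ≤ λ S^{1/2}`, and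
`λ S^{1/2}` is a dual certificate for the optimality of the pretty good measurement.
-/

section Matrices

theorem mul_mul_conjTranspose_inj {α d κ : Type*} [Ring α] [StarRing α] [Fintype d] [Fintype κ]
    [DecidableEq κ] {A : Matrix d κ α} (hA : IsUnit (Aᴴ * A)) {X Y : Matrix κ κ α} :
    A * X * Aᴴ = A * Y * Aᴴ ↔ X = Y := by
  refine ⟨fun h => ?_, fun h => h ▸ rfl⟩
  refine hA.mul_left_cancel (hA.mul_right_cancel ?_)
  simpa only [Matrix.mul_assoc] using congrArg (fun Z => Aᴴ * Z * A) h

variable {𝕜 d κ : Type*} [RCLike 𝕜] [Fintype d] [Fintype κ]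

theorem trace_mul_nonneg_of_posSemidef_s19 {A B : Matrix d d 𝕜}
    (hA : A.PosSemidef) (hB : B.PosSemidef) : 0 ≤ (A * B).trace := by
  classical
  open scoped MatrixOrder in
  obtain ⟨C, rfl⟩ := CStarAlgebra.nonneg_iff_eq_star_mul_self.mp hB.nonneg
  rw [star_eq_conjTranspose, ← Matrix.mul_assoc, trace_mul_comm, ← Matrix.mul_assoc]
  exact (hA.mul_mul_conjTranspose_same C).trace_nonneg

-- Both sides are Schur complement criteria for the positivity of `[[A, B], [Bᴴ, 1]]`.
theorem posSemidef_sub_mul_conjTranspose_iff [DecidableEq d] [DecidableEq κ]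
    {A : Matrix d d 𝕜} (hA : A.PosDef) (B : Matrix d κ 𝕜) :
    (A - B * Bᴴ).PosSemidef ↔ (1 - Bᴴ * A⁻¹ * B).PosSemidef := by
  have := hA.isUnit.invertible
  have : Invertible (1 : Matrix κ κ 𝕜) := invertibleOne
  rw [← PosDef.fromBlocks₁₁ B 1 hA, PosDef.fromBlocks₂₂ A B PosDef.one, inv_one, Matrix.mul_one]

theorem posSemidef_smul_sub_mul_conjTranspose [DecidableEq d] [DecidableEq κ]
    {R : Matrix d d 𝕜} (hR : R.PosDef) {A : Matrix d κ 𝕜} {c : ℝ} (hc : 0 < c)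
    (hA : Aᴴ * R⁻¹ * A = c • 1) : (c • R - A * Aᴴ).PosSemidef := by
  have := hR.isUnit.invertible
  have hinv : (c • R)⁻¹ = c⁻¹ • R⁻¹ := inv_eq_right_inv <| by
    rw [smul_mul_smul_comm, mul_inv_cancel₀ hc.ne', mul_inv_of_invertible, one_smul]
  have hcompl : 1 - Aᴴ * (c • R)⁻¹ * A = 0 := by
    rw [hinv, Matrix.mul_smul, Matrix.smul_mul, hA, inv_smul_smul₀ hc.ne', sub_self]
  rw [posSemidef_sub_mul_conjTranspose_iff (hR.smul hc), hcompl]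
  exact .zero

theorem mul_mul_conjTranspose_eq_sq_smul_iff [DecidableEq κ] {A : Matrix d κ 𝕜}
    (hA : IsUnit (Aᴴ * A)) {H : Matrix κ κ 𝕜} (hH : H.PosSemidef) {c : ℝ} (hc : 0 ≤ c) :
    A * H * (A * H)ᴴ = c ^ 2 • (A * Aᴴ) ↔ H = c • 1 := by
  have hleft : A * H * (A * H)ᴴ = A * (H * H) * Aᴴ := by
    simp only [conjTranspose_mul, hH.isHermitian.eq, Matrix.mul_assoc]
  have hright : c ^ 2 • (A * Aᴴ) = A * ((c • 1 : Matrix κ κ 𝕜) * c • 1) * Aᴴ := by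
    simp only [Matrix.smul_mul, Matrix.mul_smul, Matrix.mul_one, smul_smul, sq]
  rw [hleft, hright, mul_mul_conjTranspose_inj hA]
  open scoped MatrixOrder in
  exact CFC.mul_self_eq_mul_self_iff _ _ hH.nonneg (PosSemidef.one.smul hc).nonneg

theorem conjTranspose_mul_inv_mul_eq_of_mul_self_eq [DecidableEq d] {A : Matrix d κ 𝕜}
    {R : Matrix d d 𝕜} (hR : R.PosDef) (hRR : R * R = A * Aᴴ)
    {H : Matrix κ κ 𝕜} (hH : H.PosSemidef) (hHH : H * H = Aᴴ * A) :
    Aᴴ * R⁻¹ * A = H := by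
  classical
  have := hR.isUnit.invertible
  have hsq : Aᴴ * R⁻¹ * A * (Aᴴ * R⁻¹ * A) = H * H := calc
    _ = Aᴴ * R⁻¹ * (A * Aᴴ) * R⁻¹ * A := by simp only [Matrix.mul_assoc]
    _ = Aᴴ * (R⁻¹ * R) * (R * R⁻¹) * A := by rw [← hRR]; simp only [Matrix.mul_assoc]
    _ = H * H := by
      rw [inv_mul_of_invertible R, mul_inv_of_invertible R, hHH, Matrix.mul_one, Matrix.mul_one]
  open scoped MatrixOrder in
  exact (CFC.mul_self_eq_mul_self_iff _ _
    (hR.inv.posSemidef.conjTranspose_mul_mul_same A).nonneg hH.nonneg).1 hsq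

end Matrices

section Normalization

theorem forall_inv_sum_smul_eq_iff {ι V : Type*} [Fintype ι] [AddCommGroup V] [Module ℝ V]
    (τ : V →ₗ[ℝ] ℝ) {M W : ι → V} (hM : 0 ≤ ∑ i, τ (M i)) (hW : ∑ i, τ (W i) = 1) :
    (∀ i, (∑ j, τ (M j))⁻¹ • M i = W i) ↔ ∃ c : ℝ, 0 < c ∧ ∀ i, M i = c ^ 2 • W i := by
  constructor
  · intro h
    have hN : ∑ j, τ (M j) ≠ 0 := fun h0 => by simp [← h, h0] at hW
    have hN' : 0 < ∑ j, τ (M j) := hM.lt_of_ne' hN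
    refine ⟨√(∑ j, τ (M j)), Real.sqrt_pos.2 hN', fun i => ?_⟩
    rw [Real.sq_sqrt hN'.le, ← h, smul_inv_smul₀ hN]
  · rintro ⟨c, hc, h⟩ i
    have hN : ∑ j, τ (M j) = c ^ 2 := by
      simp only [h, map_smul, smul_eq_mul, ← Finset.mul_sum, hW, mul_one]
    rw [hN, h, inv_smul_smul₀ (pow_ne_zero 2 hc.ne')]

theorem forall_inv_trace_smul_eq_iff {𝕜 ι d : Type*} {κ : ι → Type*} [RCLike 𝕜] [Fintype ι]
    [Fintype d] [∀ i, Fintype (κ i)] [∀ i, DecidableEq (κ i)]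
    {A : ∀ i, Matrix d (κ i) 𝕜} (hA : ∀ i, IsUnit ((A i)ᴴ * A i))
    {H : ∀ i, Matrix (κ i) (κ i) 𝕜} (hH : ∀ i, (H i).PosSemidef)
    (htr : ∑ i, RCLike.re (A i * (A i)ᴴ).trace = 1) :
    (∀ i, (∑ j, RCLike.re (A j * H j * (A j * H j)ᴴ).trace)⁻¹ • (A i * H i * (A i * H i)ᴴ) =
        A i * (A i)ᴴ) ↔
      ∃ c : ℝ, 0 < c ∧ ∀ i, H i = c • 1 := by
  have hnonneg : 0 ≤ ∑ i, RCLike.re (A i * H i * (A i * H i)ᴴ).trace :=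
    Finset.sum_nonneg fun i _ =>
      (RCLike.nonneg_iff.1 (posSemidef_self_mul_conjTranspose _).trace_nonneg).1
  have hnormal := forall_inv_sum_smul_eq_iff (RCLike.reLm ∘ₗ traceLinearMap d ℝ 𝕜) hnonneg htr
  refine hnormal.trans ?_
  refine exists_congr fun c => and_congr_right fun hc => forall_congr' fun i => ?_
  exact mul_mul_conjTranspose_eq_sq_smul_iff (hA i) (hH i) hc.le

end Normalization

section Synthesis

variable {α d κ ι : Type*}

/-- The synthesis matrix of a family of vectors, with the vectors of the family as its columns.
For the synthesis matrix `Ψ`, the Gram matrix of the family is `Ψᴴ * Ψ` and its frame operator is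
`Ψ * Ψᴴ`. -/
def synthesis (ψ : κ → d → α) : Matrix d κ α :=
  (Matrix.of ψ)ᵀ

theorem synthesis_mul_conjTranspose_self [Fintype κ] [NonUnitalNonAssocSemiring α] [Star α]
    (ψ : κ → d → α) :
    synthesis ψ * (synthesis ψ)ᴴ = ∑ a, vecMulVec (ψ a) (star (ψ a)) := by
  ext x y
  simp [synthesis, Matrix.mul_apply, Matrix.sum_apply, vecMulVec_apply]

theorem trace_synthesis_mul_conjTranspose_self [Fintype d] [Fintype κ]
    [NonUnitalCommSemiring α] [Star α] (ψ : κ → d → α) :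
    (synthesis ψ * (synthesis ψ)ᴴ).trace = ∑ a, star (ψ a) ⬝ᵥ ψ a := by
  rw [trace_mul_comm]
  rfl

theorem synthesis_sum_smul {κ' : Type*} [Fintype κ] [NonUnitalCommSemiring α]
    (M : Matrix κ κ' α) (ψ : κ → d → α) :
    synthesis (fun j => ∑ k, M k j • ψ k) = synthesis ψ * M := by
  ext x j
  simp [synthesis, Matrix.mul_apply, mul_comm]

theorem blockDiag'_eq_smul_one_iff {S : Type*} {κ : ι → Type*} [∀ i, DecidableEq (κ i)]
    [Zero α] [One α] [SMulZeroClass S α] {M : Matrix (Σ i, κ i) (Σ i, κ i) α} {i : ι} {c : S} :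
    M.blockDiag' i = c • 1 ↔ ∀ a b, M ⟨i, a⟩ ⟨i, b⟩ = if a = b then c • 1 else 0 := by
  simp [← Matrix.ext_iff, blockDiag'_apply, Matrix.one_apply]

theorem posDef_blockDiag' [Ring α] [PartialOrder α] [StarRing α] {κ : ι → Type*}
    {M : Matrix (Σ i, κ i) (Σ i, κ i) α} (hM : M.PosDef) (i : ι) : (M.blockDiag' i).PosDef :=
  hM.submatrix sigma_mk_injective

theorem isUnit_conjTranspose_synthesis_mul_self_of_posDef {𝕜 : Type*} [RCLike 𝕜] [Fintype d]
    [Fintype ι] {κ : ι → Type*} [∀ i, Fintype (κ i)] [∀ i, DecidableEq (κ i)]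
    {ψ : (Σ i, κ i) → d → 𝕜} {H : Matrix (Σ i, κ i) (Σ i, κ i) 𝕜} (hH : H.PosDef)
    (hHH : H * H = (synthesis ψ)ᴴ * synthesis ψ) (i : ι) :
    IsUnit ((synthesis fun j => ψ ⟨i, j⟩)ᴴ * synthesis fun j => ψ ⟨i, j⟩) := by
  classical
  have hgram : (H * H).PosDef := by
    simpa only [hH.isHermitian.eq] using
      PosDef.conjTranspose_mul_self H (mulVec_injective_iff_isUnit.2 hH.isUnit)
  exact (posDef_blockDiag' (hHH ▸ hgram) i).isUnit

end Synthesis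

section Discrimination

variable {ι : Type} [Fintype ι] {n : ℕ} {p : ι → ℝ} {ρ E : ι → Matrix (Fin n) (Fin n) ℂ}

variable (p ρ E) in
theorem succProb_eq_re_trace_sum :
    succProb p ρ E = (∑ i, (p i : ℂ) • ρ i * E i).trace.re := by
  simp only [succProb, trace_sum, Complex.re_sum, Matrix.smul_mul, trace_smul, smul_eq_mul,
    Complex.re_ofReal_mul]

theorem succProb_le_re_trace {K : Matrix (Fin n) (Fin n) ℂ}
    (hK : ∀ i, (K - (p i : ℂ) • ρ i).PosSemidef) (hE : IsPOVM E) :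
    succProb p ρ E ≤ K.trace.re := by
  have hgap : K - ∑ i, (p i : ℂ) • ρ i * E i = ∑ i, (K - (p i : ℂ) • ρ i) * E i := by
    simp only [Matrix.sub_mul, Finset.sum_sub_distrib, ← Finset.mul_sum, hE.2, Matrix.mul_one]
  rw [succProb_eq_re_trace_sum, ← sub_nonneg, ← Complex.sub_re, ← trace_sub, hgap, trace_sum,
    Complex.re_sum]
  exact Finset.sum_nonneg fun i _ =>
    (Complex.nonneg_iff.1 (trace_mul_nonneg_of_posSemidef_s19 (hK i) (hE.1 i))).1

-- The sufficient half of the Holevo–Yuen–Kennedy–Lax optimality conditions.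
theorem isOptimal_of_posSemidef_sub (hE : IsPOVM E)
    (h : ∀ i, (∑ j, (p j : ℂ) • ρ j * E j - (p i : ℂ) • ρ i).PosSemidef) :
    IsOptimal p ρ E :=
  ⟨hE, fun _ hF => (succProb_le_re_trace h hF).trans_eq (succProb_eq_re_trace_sum p ρ E).symm⟩

theorem isPOVM_prettyGood {W : ι → Matrix (Fin n) (Fin n) ℂ} (hW : ∀ i, (W i).PosSemidef)
    {R : Matrix (Fin n) (Fin n) ℂ} (hR : R.PosDef) (hRR : R * R = ∑ i, W i) :
    IsPOVM fun i => R⁻¹ * W i * R⁻¹ := by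
  have := hR.isUnit.invertible
  refine ⟨fun i => ?_, ?_⟩
  · simpa only [hR.inv.isHermitian.eq] using (hW i).mul_mul_conjTranspose_same R⁻¹
  · rw [← Finset.sum_mul, ← Finset.mul_sum, ← hRR, inv_mul_cancel_left_of_invertible,
      mul_inv_of_invertible]

theorem isOptimal_prettyGood {κ : ι → Type*} [∀ i, Fintype (κ i)] [∀ i, DecidableEq (κ i)]
    {A : ∀ i, Matrix (Fin n) (κ i) ℂ} (hA : ∀ i, (p i : ℂ) • ρ i = A i * (A i)ᴴ)
    {R : Matrix (Fin n) (Fin n) ℂ} (hR : R.PosDef) (hRR : R * R = ∑ i, (p i : ℂ) • ρ i)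
    {c : ℝ} (hc : 0 < c) (hAR : ∀ i, (A i)ᴴ * R⁻¹ * A i = c • 1) :
    IsOptimal p ρ fun i => R⁻¹ * ((p i : ℂ) • ρ i) * R⁻¹ := by
  have := hR.isUnit.invertible
  have hkey (i) : (p i : ℂ) • ρ i * (R⁻¹ * ((p i : ℂ) • ρ i) * R⁻¹) =
      c • ((p i : ℂ) • ρ i * R⁻¹) := calc
    _ = A i * ((A i)ᴴ * R⁻¹ * A i) * (A i)ᴴ * R⁻¹ := by simp only [hA, Matrix.mul_assoc]
    _ = _ := by simp only [hAR, hA, Matrix.mul_smul, Matrix.smul_mul, Matrix.mul_one]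
  have hsum : ∑ i, (p i : ℂ) • ρ i * (R⁻¹ * ((p i : ℂ) • ρ i) * R⁻¹) = c • R := by
    simp only [hkey]
    rw [← Finset.smul_sum, ← Finset.sum_mul, ← hRR, mul_inv_cancel_right_of_invertible]
  refine isOptimal_of_posSemidef_sub (isPOVM_prettyGood (fun i => ?_) hR hRR) fun i => ?_
  · exact hA i ▸ posSemidef_self_mul_conjTranspose _
  · rw [hsum, hA]
    exact posSemidef_smul_sub_mul_conjTranspose hR hc (hAR i)

variable {κ : ι → Type*} [∀ i, Fintype (κ i)] [∀ i, DecidableEq (κ i)]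
  {ψ χ : (Σ i, κ i) → Fin n → ℂ} {H : Matrix (Σ i, κ i) (Σ i, κ i) ℂ}

theorem isOptimal_prettyGood_of_blockDiag'_eq_smul_one
    (hψ : ∀ i, (p i : ℂ) • ρ i = ∑ j, outer (ψ ⟨i, j⟩)) (hH : H.PosSemidef)
    (hHH : H * H = (synthesis ψ)ᴴ * synthesis ψ) {c : ℝ} (hc : 0 < c)
    (hblock : ∀ i, H.blockDiag' i = c • 1) {R : Matrix (Fin n) (Fin n) ℂ} (hR : R.PosDef)
    (hRR : R * R = ∑ i, (p i : ℂ) • ρ i) :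
    IsOptimal p ρ fun i => R⁻¹ * ((p i : ℂ) • ρ i) * R⁻¹ := by
  have hA (i) := (hψ i).trans (synthesis_mul_conjTranspose_self fun j => ψ ⟨i, j⟩).symm
  have hframe : R * R = synthesis ψ * (synthesis ψ)ᴴ := by
    rw [hRR, synthesis_mul_conjTranspose_self, Fintype.sum_sigma]
    exact Finset.sum_congr rfl fun i _ => hψ i
  have hroot := conjTranspose_mul_inv_mul_eq_of_mul_self_eq hR hframe hH hHH
  exact isOptimal_prettyGood hA hR hRR hc fun i =>
    (congrArg (fun M => M.blockDiag' i) hroot).trans (hblock i)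

theorem forall_inv_smul_sum_outer_eq_iff (hρ : ∑ i, p i * (ρ i).trace.re = 1)
    (hψ : ∀ i, (p i : ℂ) • ρ i = ∑ j, outer (ψ ⟨i, j⟩)) (hH : H.PosDef)
    (hHH : H * H = (synthesis ψ)ᴴ * synthesis ψ)
    (hχ : ∀ i j, χ ⟨i, j⟩ = ∑ k, H ⟨i, k⟩ ⟨i, j⟩ • ψ ⟨i, k⟩) :
    (∀ i, ((∑ a, (star (χ a) ⬝ᵥ χ a).re : ℝ) : ℂ)⁻¹ • ∑ j, outer (χ ⟨i, j⟩) = (p i : ℂ) • ρ i) ↔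
      ∃ c : ℝ, 0 < c ∧ ∀ i, H.blockDiag' i = c • 1 := by
  set A : ∀ i, Matrix (Fin n) (κ i) ℂ := fun i => synthesis fun j => ψ ⟨i, j⟩
  have hA (i) : A i * (A i)ᴴ = (p i : ℂ) • ρ i :=
    (synthesis_mul_conjTranspose_self _).trans (hψ i).symm
  have hχA (i) : (synthesis fun j => χ ⟨i, j⟩) = A i * H.blockDiag' i := by
    simp only [hχ]
    exact synthesis_sum_smul _ _
  have hnorm : ∑ a, (star (χ a) ⬝ᵥ χ a).re =
      ∑ i, RCLike.re (A i * H.blockDiag' i * (A i * H.blockDiag' i)ᴴ).trace := by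
    simp only [← hχA, trace_synthesis_mul_conjTranspose_self, map_sum, Fintype.sum_sigma]
    rfl
  have htr : ∑ i, RCLike.re (A i * (A i)ᴴ).trace = 1 := by
    simpa [hA] using hρ
  rw [← forall_inv_trace_smul_eq_iff (isUnit_conjTranspose_synthesis_mul_self_of_posDef hH hHH)
    (fun i => (posDef_blockDiag' hH i).posSemidef) htr, hnorm]
  refine forall_congr' fun i => ?_
  rw [← Complex.ofReal_inv, Complex.coe_smul, hA, ← hχA, synthesis_mul_conjTranspose_self]
  rfl

end Discrimination

theorem stmt_19_general {ι : Type} [Fintype ι] {κ : ι → Type*} [∀ i, Fintype (κ i)]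
    [∀ i, DecidableEq (κ i)] {n : ℕ} {p : ι → ℝ} {ρ : ι → Matrix (Fin n) (Fin n) ℂ}
    (hρ : ∑ i, p i * (ρ i).trace.re = 1) {ψ : (Σ i, κ i) → Fin n → ℂ}
    (hψ : ∀ i, (p i : ℂ) • ρ i = ∑ j, outer (ψ ⟨i, j⟩))
    {G : Matrix (Σ i, κ i) (Σ i, κ i) ℂ} (hG : ∀ a b, G a b = star (ψ a) ⬝ᵥ ψ b)
    {H : Matrix (Σ i, κ i) (Σ i, κ i) ℂ} (hH : H.PosDef) (hHG : H * H = G)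
    {χ : (Σ i, κ i) → Fin n → ℂ} (hχ : ∀ i j, χ ⟨i, j⟩ = ∑ k, H ⟨i, k⟩ ⟨i, j⟩ • ψ ⟨i, k⟩)
    {N : ℝ} (hN : N = ∑ a, (star (χ a) ⬝ᵥ χ a).re) {T : ι → Matrix (Fin n) (Fin n) ℂ}
    (hT : ∀ i, T i = (N : ℂ)⁻¹ • ∑ j, outer (χ ⟨i, j⟩)) :
    ((∀ i, T i = (p i : ℂ) • ρ i) ↔
      ∃ c : ℝ, 0 < c ∧ ∀ i a b, H ⟨i, a⟩ ⟨i, b⟩ = if a = b then (c : ℂ) else 0) ∧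
    ((∀ i, T i = (p i : ℂ) • ρ i) →
      ∀ R : Matrix (Fin n) (Fin n) ℂ, R.PosDef → R * R = ∑ i, (p i : ℂ) • ρ i →
        IsOptimal p ρ fun i => R⁻¹ * ((p i : ℂ) • ρ i) * R⁻¹) := by
  have hgram : H * H = (synthesis ψ)ᴴ * synthesis ψ := hHG.trans (Matrix.ext hG)
  have hiff : (∀ i, T i = (p i : ℂ) • ρ i) ↔ ∃ c : ℝ, 0 < c ∧ ∀ i, H.blockDiag' i = c • 1 := by
    simpa only [hT, hN] using forall_inv_smul_sum_outer_eq_iff hρ hψ hH hgram hχ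
  refine ⟨by simpa only [blockDiag'_eq_smul_one_iff, Complex.real_smul, mul_one] using hiff,
    fun hTρ R hR hRR => ?_⟩
  obtain ⟨c, hc, hblock⟩ := hiff.1 hTρ
  exact isOptimal_prettyGood_of_blockDiag'_eq_smul_one hψ hH.posSemidef hgram hc hblock hR hRR

/-- With `χᵢⱼ = ∑ₖ (H⁽ⁱⁱ⁾)ₖⱼ ψᵢₖ`, `N = ∑ ‖χᵢⱼ‖²` and `Tᵢ = (1/N) ∑ⱼ χᵢⱼχᵢⱼ*`:
`Tᵢ = pᵢρᵢ` for all `i` iff all diagonal blocks of `G^{1/2}` equal `λ·I` for some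
`λ > 0`; and in that case the PGM of `(p, ρ)` is optimal for its MED. -/
theorem stmt_19 {m n : ℕ} (p : Fin m → ℝ) (ρ : Fin m → Matrix (Fin n) (Fin n) ℂ)
    (hens : IsLIEnsemble p ρ)
    (r : Fin m → ℕ) (hr : ∀ i, (ρ i).rank = r i)
    (ψ : ((i : Fin m) × Fin (r i)) → (Fin n → ℂ))
    (hli : LinearIndependent ℂ ψ) (hsp : Submodule.span ℂ (Set.range ψ) = ⊤)
    (hdec : ∀ i, (p i : ℂ) • ρ i = ∑ j : Fin (r i), outer (ψ ⟨i, j⟩))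
    (G : Matrix ((i : Fin m) × Fin (r i)) ((i : Fin m) × Fin (r i)) ℂ)
    (hG : ∀ a b, G a b = star (ψ a) ⬝ᵥ ψ b)
    (RG : Matrix ((i : Fin m) × Fin (r i)) ((i : Fin m) × Fin (r i)) ℂ)
    (hRG : RG.PosDef) (hRG2 : RG * RG = G)
    (χ : ((i : Fin m) × Fin (r i)) → (Fin n → ℂ))
    (hχ : ∀ (i : Fin m) (j : Fin (r i)),
      χ ⟨i, j⟩ = ∑ k : Fin (r i), RG ⟨i, k⟩ ⟨i, j⟩ • ψ ⟨i, k⟩)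
    (N : ℝ) (hN : N = ∑ a, (star (χ a) ⬝ᵥ χ a).re)
    (T : Fin m → Matrix (Fin n) (Fin n) ℂ)
    (hT : ∀ i, T i = ((N : ℝ) : ℂ)⁻¹ • ∑ j : Fin (r i), outer (χ ⟨i, j⟩)) :
    ((∀ i, T i = (p i : ℂ) • ρ i) ↔
      ∃ lam : ℝ, 0 < lam ∧ ∀ (i : Fin m) (a b : Fin (r i)),
        RG ⟨i, a⟩ ⟨i, b⟩ = if a = b then (lam : ℂ) else 0) ∧
    ((∀ i, T i = (p i : ℂ) • ρ i) → PGMIsOptimal p ρ p ρ) :=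
  stmt_19_general (by simpa [hens.1.2.2.2] using hens.1.2.1) hdec hG hRG hRG2 hχ hN hT
end
end
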